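/- arXiv:2408.14981 — 2 statements merged into one kernel-verified Lean document; each statement's English description precedes it below -/
import Mathlib

section
/- Let π : (Z, U) → (Y, S) be a factor map of topological dynamical systems and f ∈ C(Z). Then α(f) = sup over ergodic ν ∈ ∂_e M_S(Y) of ψ_f(ν), and moreover α(f) = sup over ergodic ν ∈ ∂_e M_S(Y) of the infimum of ∫ f dλ over ergodic λ ∈ ∂_e M_U(Z) with π_* λ = ν. -/
open MeasureTheory Filter Topology
open scoped ENNReal NNReal

noncomputable section

/-- The set of `U`-invariant Borel probability measures. -/
def invMeas {Z : Type*} [MeasurableSpace Z] (U : Z → Z) : Set (ProbabilityMeasure Z) :=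
  {μ | μ.toMeasure.map U = μ.toMeasure}

/-- `ψ_f(ν) = min { ∫ f dλ : λ ∈ M_U(Z), π_* λ = ν }`. -/
def psi {Z Y : Type*} [MeasurableSpace Z] [MeasurableSpace Y]
    (U : Z → Z) (π : Z → Y) (f : Z → ℝ) (ν : ProbabilityMeasure Y) : ℝ :=
  sInf {r | ∃ lam ∈ invMeas U, lam.toMeasure.map π = ν.toMeasure ∧
    r = ∫ z, f z ∂lam.toMeasure}

/-- `α(f) = sup_{ν ∈ M_S(Y)} ψ_f(ν)`. -/
def alphaF {Z Y : Type*} [MeasurableSpace Z] [MeasurableSpace Y]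
    (U : Z → Z) (S : Y → Y) (π : Z → Y) (f : Z → ℝ) : ℝ :=
  sSup {r | ∃ ν ∈ invMeas S, r = psi U π f ν}

/-- The space of linear functionals on `C(X, ℝ)`, with the topology of pointwise convergence. -/
abbrev WeakFunctional (X : Type*) [TopologicalSpace X] : Type _ :=
  WeakBilin (LinearMap.id : (C(X, ℝ) →ₗ[ℝ] ℝ) →ₗ[ℝ] C(X, ℝ) →ₗ[ℝ] ℝ)

instance WeakFunctional.instT2Space (X : Type*) [TopologicalSpace X] :
    T2Space (WeakFunctional X) :=
  (WeakBilin.isEmbedding Function.injective_id).t2Space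

lemma exists_probabilityMeasure_add_smul {X : Type*} [MeasurableSpace X]
    (μ₁ μ₂ : ProbabilityMeasure X) {a b : ℝ≥0∞}
    (hab : a + b = 1) :
    ∃ μ : ProbabilityMeasure X, μ.toMeasure = a • μ₁.toMeasure + b • μ₂.toMeasure :=
  ⟨⟨a • μ₁.toMeasure + b • μ₂.toMeasure, ⟨by simp [hab]⟩⟩, rfl⟩

lemma eq_and_eq_of_convex_combination {a b x y m : ℝ} (ha : 0 < a) (hb : 0 < b)
    (hab : a + b = 1) (hx : x ≤ m) (hy : y ≤ m) (h : a * x + b * y = m) : x = m ∧ y = m := by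
  have key : a * (m - x) + b * (m - y) = 0 := by linear_combination m * hab - h
  have h₁ := mul_nonneg ha.le (sub_nonneg.2 hx)
  have h₂ := mul_nonneg hb.le (sub_nonneg.2 hy)
  have k₁ := (mul_eq_zero.1 (by linarith : a * (m - x) = 0)).resolve_left ha.ne'
  have k₂ := (mul_eq_zero.1 (by linarith : b * (m - y) = 0)).resolve_left hb.ne'
  constructor <;> linarith

lemma isClosed_setOf_map_eq {X Y : Type*} [TopologicalSpace X]
    [MeasurableSpace X] [BorelSpace X] [TopologicalSpace Y]
    [TopologicalSpace.MetrizableSpace Y] [MeasurableSpace Y] [BorelSpace Y]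
    {p : X → Y} (hp : Continuous p) (ν : ProbabilityMeasure Y) :
    IsClosed {μ : ProbabilityMeasure X | μ.toMeasure.map p = ν.toMeasure} := by
  convert! isClosed_eq (ProbabilityMeasure.continuous_map hp)
    (continuous_const (y := ν)) using 1
  ext μ
  exact ProbabilityMeasure.toMeasure_injective.eq_iff (a := μ.map hp.measurable.aemeasurable)

lemma isClosed_invMeas {X : Type*} [TopologicalSpace X] [TopologicalSpace.MetrizableSpace X]
    [MeasurableSpace X] [BorelSpace X] {T : X → X} (hT : Continuous T) : IsClosed (invMeas T) := by
  convert! isClosed_eq (ProbabilityMeasure.continuous_map hT) continuous_id using 1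
  ext μ
  exact ProbabilityMeasure.toMeasure_injective.eq_iff (a := μ.map hT.measurable.aemeasurable)

section Integration

variable {X : Type*} [TopologicalSpace X] [CompactSpace X] [MeasurableSpace X] [BorelSpace X]

lemma integrable_of_continuous (μ : Measure X) [IsFiniteMeasure μ] {g : X → ℝ}
    (hg : Continuous g) : Integrable g μ := by
  simpa using! (BoundedContinuousFunction.mkOfCompact ⟨g, hg⟩).integrable μ

/-- Integration against a probability measure, as a linear functional on continuous functions. -/
def integralFunctional (μ : ProbabilityMeasure X) : WeakFunctional X :=
  ({ toFun := fun g => ∫ x, g x ∂μ.toMeasure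
     map_add' := fun g h => integral_add (integrable_of_continuous _ g.continuous)
       (integrable_of_continuous _ h.continuous)
     map_smul' := fun c g => integral_const_mul c g } : C(X, ℝ) →ₗ[ℝ] ℝ)

lemma continuous_integralFunctional :
    Continuous (integralFunctional : ProbabilityMeasure X → WeakFunctional X) :=
  WeakBilin.continuous_of_continuous_eval _ fun g =>
    ProbabilityMeasure.continuous_integral_continuousMap g

lemma integralFunctional_injective [TopologicalSpace.MetrizableSpace X] :
    Function.Injective (integralFunctional : ProbabilityMeasure X → WeakFunctional X) := by
  intro μ ν h
  apply ProbabilityMeasure.toMeasure_injective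
  apply ext_of_forall_integral_eq_of_IsFiniteMeasure
  intro g
  exact congrArg (fun L : C(X, ℝ) →ₗ[ℝ] ℝ => L g.toContinuousMap) h

lemma integral_add_smul (μ₁ μ₂ : Measure X) [IsFiniteMeasure μ₁] [IsFiniteMeasure μ₂]
    {a b : ℝ≥0∞} (ha : a ≠ ∞) (hb : b ≠ ∞) {g : X → ℝ} (hg : Continuous g) :
    ∫ x, g x ∂(a • μ₁ + b • μ₂) = a.toReal * ∫ x, g x ∂μ₁ + b.toReal * ∫ x, g x ∂μ₂ := by
  rw [integral_add_measure ((integrable_of_continuous _ hg).smul_measure ha)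
    ((integrable_of_continuous _ hg).smul_measure hb), integral_smul_measure,
    integral_smul_measure, smul_eq_mul, smul_eq_mul]

lemma integral_birkhoffAverage {T : X → X} (hT : Continuous T) {g : X → ℝ} (hg : Continuous g)
    {ν : ProbabilityMeasure X} (hν : ν ∈ invMeas T) (n : ℕ) :
    ∫ y, birkhoffAverage ℝ T g (n + 1) y ∂ν.toMeasure = ∫ y, g y ∂ν.toMeasure := by
  have hmp : MeasurePreserving T ν.toMeasure ν.toMeasure := ⟨hT.measurable, hν⟩
  have hk (k : ℕ) : ∫ y, g (T^[k] y) ∂ν.toMeasure = ∫ y, g y ∂ν.toMeasure := by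
    conv_rhs => rw [← (hmp.iterate k).map_eq]
    rw [integral_map (hT.iterate k).measurable.aemeasurable hg.aestronglyMeasurable]
  simp only [birkhoffAverage, birkhoffSum, smul_eq_mul]
  rw [integral_const_mul, integral_finsetSum _
    fun k _ => integrable_of_continuous (g := fun y => g (T^[k] y)) _
      (hg.comp (hT.iterate k))]
  simp only [hk, Finset.sum_const, Finset.card_range, nsmul_eq_mul]
  rw [inv_mul_cancel_left₀ (by positivity)]

variable [TopologicalSpace.MetrizableSpace X]

/-- A nonempty closed face of the simplex of invariant measures contains an ergodic measure. -/
lemma exists_ergodic_of_face {T : X → X} (hT : Continuous T) {A : Set (ProbabilityMeasure X)}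
    (hA : IsClosed A) (hne : A.Nonempty) (hinv : A ⊆ invMeas T)
    (hface : ∀ μ₁ ∈ invMeas T, ∀ μ₂ ∈ invMeas T, ∀ μ ∈ A, ∀ a b : ℝ≥0∞, 0 < a → 0 < b →
      a + b = 1 → a • μ₁.toMeasure + b • μ₂.toMeasure = μ.toMeasure → μ₁ ∈ A ∧ μ₂ ∈ A) :
    ∃ μ ∈ A, Ergodic T μ.toMeasure := by
  obtain ⟨x, hx⟩ := (hA.isCompact.image continuous_integralFunctional).extremePoints_nonempty
    (hne.image _)
  rw [mem_extremePoints_iff_left] at hx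
  obtain ⟨⟨μ, hμA, rfl⟩, hext⟩ := hx
  refine ⟨μ, hμA, Ergodic.of_mem_extremePoints (mem_extremePoints_iff_left.2
    ⟨⟨⟨hT.measurable, hinv hμA⟩, inferInstance⟩, ?_⟩)⟩
  rintro ν₁ ⟨h₁, p₁⟩ ν₂ ⟨h₂, p₂⟩ ⟨a, b, ha, hb, hab, hμ⟩
  have ha' : a ≠ ∞ := ne_top_of_le_ne_top ENNReal.one_ne_top (hab ▸ le_self_add)
  have hb' : b ≠ ∞ := ne_top_of_le_ne_top ENNReal.one_ne_top (hab ▸ le_add_self)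
  obtain ⟨m₁, m₂⟩ := hface ⟨ν₁, p₁⟩ h₁.map_eq ⟨ν₂, p₂⟩ h₂.map_eq μ hμA a b ha hb hab hμ
  have key := hext _ ⟨_, m₁, rfl⟩ _ ⟨_, m₂, rfl⟩
    ⟨a.toReal, b.toReal, ENNReal.toReal_pos ha.ne' ha', ENNReal.toReal_pos hb.ne' hb',
      by rw [← ENNReal.toReal_add ha' hb', hab, ENNReal.toReal_one], ?_⟩
  · exact congrArg ProbabilityMeasure.toMeasure (integralFunctional_injective key)
  · refine LinearMap.ext (fun g => ?_ : ∀ g : C(X, ℝ), _)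
    change a.toReal * ∫ x, g x ∂ν₁ + b.toReal * ∫ x, g x ∂ν₂ = ∫ x, g x ∂μ.toMeasure
    rw [← hμ, integral_add_smul ν₁ ν₂ ha' hb' g.continuous]

/-- Among invariant measures, a continuous function has an ergodic maximizing measure. -/
lemma exists_ergodic_integral_ge {T : X → X} (hT : Continuous T) {g : X → ℝ} (hg : Continuous g)
    {ν : ProbabilityMeasure X} (hν : ν ∈ invMeas T) :
    ∃ μ ∈ invMeas T, Ergodic T μ.toMeasure ∧ ∫ x, g x ∂ν.toMeasure ≤ ∫ x, g x ∂μ.toMeasure := by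
  have hcont : Continuous fun μ : ProbabilityMeasure X => ∫ x, g x ∂μ.toMeasure :=
    ProbabilityMeasure.continuous_integral_continuousMap (⟨g, hg⟩ : C(X, ℝ))
  obtain ⟨m, hm, hmax⟩ := (isClosed_invMeas hT).isCompact.exists_isMaxOn ⟨ν, hν⟩
    hcont.continuousOn
  have hmax' : ∀ μ ∈ invMeas T, ∫ x, g x ∂μ.toMeasure ≤ ∫ x, g x ∂m.toMeasure := hmax
  obtain ⟨μ, ⟨hμ, hμm⟩, herg⟩ := exists_ergodic_of_face hT
    (A := {μ | μ ∈ invMeas T ∧ ∫ x, g x ∂μ.toMeasure = ∫ x, g x ∂m.toMeasure})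
    ((isClosed_invMeas hT).inter (isClosed_eq hcont continuous_const))
    ⟨m, hm, rfl⟩ (fun _ h => h.1) (by
      rintro μ₁ h₁ μ₂ h₂ μ ⟨-, hμ⟩ a b ha hb hab h
      have ha' : a ≠ ∞ := ne_top_of_le_ne_top ENNReal.one_ne_top (hab ▸ le_self_add)
      have hb' : b ≠ ∞ := ne_top_of_le_ne_top ENNReal.one_ne_top (hab ▸ le_add_self)
      rw [← h, integral_add_smul _ _ ha' hb' hg] at hμ
      have hpa := ENNReal.toReal_pos ha.ne' ha'
      have hpb := ENNReal.toReal_pos hb.ne' hb'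
      have hsum : a.toReal + b.toReal = 1 := by
        rw [← ENNReal.toReal_add ha' hb', hab, ENNReal.toReal_one]
      have i₁ := hmax' μ₁ h₁
      have i₂ := hmax' μ₂ h₂
      obtain ⟨j₁, j₂⟩ := eq_and_eq_of_convex_combination hpa hpb hsum i₁ i₂ hμ
      exact ⟨⟨h₁, j₁⟩, ⟨h₂, j₂⟩⟩)
  exact ⟨μ, hμ, herg, hμm ▸ hmax' ν hν⟩

/-- Krylov–Bogoliubov: limits of empirical measures along orbits are invariant. -/
lemma exists_invMeas_tendsto {T : X → X} (hT : Continuous T) (x : ℕ → X) :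
    ∃ μ ∈ invMeas T, ∀ g : C(X, ℝ),
      Tendsto (fun n => birkhoffAverage ℝ T g (n + 1) (x n)) (hyperfilter ℕ)
        (𝓝 (∫ y, g y ∂μ.toMeasure)) := by
  let e : ℕ → ProbabilityMeasure X := fun n =>
    ⟨((n + 1 : ℕ) : ℝ≥0∞)⁻¹ • ∑ k ∈ Finset.range (n + 1), Measure.dirac (T^[k] (x n)), ⟨by
      simp only [Measure.smul_apply, Measure.coe_finsetSum, Finset.sum_apply, measure_univ,
        Finset.sum_const, Finset.card_range, smul_eq_mul, nsmul_eq_mul, mul_one]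
      exact ENNReal.inv_mul_cancel (by simp) (ENNReal.natCast_ne_top _)⟩⟩
  have he (n : ℕ) {g : X → ℝ} (hg : Continuous g) :
      ∫ y, g y ∂(e n).toMeasure = birkhoffAverage ℝ T g (n + 1) (x n) := by
    change ∫ y, g y ∂(((n + 1 : ℕ) : ℝ≥0∞)⁻¹ • ∑ k ∈ Finset.range (n + 1),
      Measure.dirac (T^[k] (x n))) = _
    rw [integral_smul_measure, integral_finsetSum_measure
      fun k _ => integrable_of_continuous _ hg]
    rw [ENNReal.toReal_inv, ENNReal.toReal_natCast]
    simp only [birkhoffAverage, birkhoffSum, integral_dirac' _ _ hg.stronglyMeasurable]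
  obtain ⟨μ, -, hμ⟩ := isCompact_univ.ultrafilter_le_nhds ((hyperfilter ℕ).map e) (by simp)
  have hlim (g : C(X, ℝ)) :
      Tendsto (fun n => birkhoffAverage ℝ T g (n + 1) (x n)) (hyperfilter ℕ)
        (𝓝 (∫ y, g y ∂μ.toMeasure)) := by
    simp_rw [← he _ g.continuous]
    exact ((ProbabilityMeasure.continuous_integral_continuousMap g).tendsto μ).comp hμ
  refine ⟨μ, ?_, hlim⟩
  have : IsProbabilityMeasure (μ.toMeasure.map T) :=
    Measure.isProbabilityMeasure_map hT.measurable.aemeasurable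
  refine ext_of_forall_integral_eq_of_IsFiniteMeasure fun g => ?_
  rw [integral_map hT.measurable.aemeasurable g.continuous.aestronglyMeasurable]
  refine tendsto_nhds_unique (hlim (g.toContinuousMap.comp ⟨T, hT⟩)) ?_
  have hdiff : Tendsto (fun n => birkhoffAverage ℝ T g (n + 1) (T (x n)) -
      birkhoffAverage ℝ T g (n + 1) (x n)) atTop (𝓝 0) := by
    have hC : Tendsto (fun n : ℕ => 2 * ‖g‖ / ((n + 1 : ℕ) : ℝ)) atTop (𝓝 0) :=
      (tendsto_const_nhds.div_atTop tendsto_natCast_atTop_atTop).comp (tendsto_add_atTop_nat 1)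
    refine squeeze_zero_norm (fun n => ?_) hC
    rw [← dist_eq_norm, dist_birkhoffAverage_apply_birkhoffAverage]
    gcongr
    exact g.dist_le_two_norm _ _
  have hadd := (hdiff.mono_left Nat.hyperfilter_le_atTop).add (hlim g.toContinuousMap)
  rw [zero_add] at hadd
  refine hadd.congr fun n => ?_
  change birkhoffAverage ℝ T g (n + 1) (T (x n)) - birkhoffAverage ℝ T g (n + 1) (x n) +
    birkhoffAverage ℝ T g (n + 1) (x n) = birkhoffAverage ℝ T (g ∘ T) (n + 1) (x n)
  simp only [sub_add_cancel, birkhoffAverage, birkhoffSum, Function.comp_apply,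
    ← Function.iterate_succ_apply', Function.iterate_succ_apply]

end Integration

lemma integral_comp_of_map_eq {Z Y : Type*} [TopologicalSpace Z] [MeasurableSpace Z] [BorelSpace Z]
    [TopologicalSpace Y] [MeasurableSpace Y] [BorelSpace Y]
    {p : Z → Y} (hp : Continuous p) {lam : ProbabilityMeasure Z}
    {ν : ProbabilityMeasure Y} (h : lam.toMeasure.map p = ν.toMeasure)
    {g : Y → ℝ} (hg : Continuous g) :
    ∫ z, g (p z) ∂lam.toMeasure = ∫ y, g y ∂ν.toMeasure := by
  rw [← h, integral_map hp.measurable.aemeasurable hg.aestronglyMeasurable]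

lemma map_mem_invMeas {Z Y : Type*} [TopologicalSpace Z] [MeasurableSpace Z] [BorelSpace Z]
    [TopologicalSpace Y] [MeasurableSpace Y] [BorelSpace Y]
    {U : Z → Z} {S : Y → Y} {p : Z → Y} (hU : Continuous U) (hS : Continuous S) (hp : Continuous p)
    (hfac : S ∘ p = p ∘ U) {lam : ProbabilityMeasure Z} (hlam : lam ∈ invMeas U)
    {ν : ProbabilityMeasure Y} (h : lam.toMeasure.map p = ν.toMeasure) : ν ∈ invMeas S := by
  change ν.toMeasure.map S = ν.toMeasure
  rw [← h, Measure.map_map hS.measurable hp.measurable, hfac,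
    ← Measure.map_map hp.measurable hU.measurable,
    show lam.toMeasure.map U = lam.toMeasure from hlam]

lemma abs_integral_le_norm {Z : Type*} [TopologicalSpace Z] [CompactSpace Z] [MeasurableSpace Z]
    {f : Z → ℝ} (hf : Continuous f) (lam : ProbabilityMeasure Z) :
    |∫ z, f z ∂lam.toMeasure| ≤ ‖(⟨f, hf⟩ : C(Z, ℝ))‖ := by
  have := norm_integral_le_of_norm_le_const (μ := lam.toMeasure) (f := f)
    (ae_of_all _ fun z => (⟨f, hf⟩ : C(Z, ℝ)).norm_coe_le_norm z)
  simpa using this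

lemma bddBelow_fibre_integrals {Z Y : Type*} [TopologicalSpace Z] [CompactSpace Z]
    [MeasurableSpace Z] [MeasurableSpace Y] {U : Z → Z} {p : Z → Y}
    {f : Z → ℝ} (hf : Continuous f) (ν : ProbabilityMeasure Y) :
    BddBelow {r | ∃ lam ∈ invMeas U, lam.toMeasure.map p = ν.toMeasure ∧
      r = ∫ z, f z ∂lam.toMeasure} := by
  refine ⟨-‖(⟨f, hf⟩ : C(Z, ℝ))‖, ?_⟩
  rintro _ ⟨lam, -, -, rfl⟩
  exact (abs_le.1 (abs_integral_le_norm hf lam)).1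

lemma psi_le {Z Y : Type*} [TopologicalSpace Z] [CompactSpace Z]
    [MeasurableSpace Z] [MeasurableSpace Y] {U : Z → Z} {p : Z → Y}
    {f : Z → ℝ} (hf : Continuous f) {ν : ProbabilityMeasure Y}
    {lam : ProbabilityMeasure Z} (hlam : lam ∈ invMeas U)
    (h : lam.toMeasure.map p = ν.toMeasure) : psi U p f ν ≤ ∫ z, f z ∂lam.toMeasure :=
  csInf_le (bddBelow_fibre_integrals hf ν) ⟨lam, hlam, h, rfl⟩

lemma exists_invMeas_integral_comp_ge {Z Y : Type*}
    [TopologicalSpace Z] [CompactSpace Z] [TopologicalSpace.MetrizableSpace Z]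
    [MeasurableSpace Z] [BorelSpace Z]
    [TopologicalSpace Y] [CompactSpace Y] [MeasurableSpace Y] [BorelSpace Y]
    {U : Z → Z} {S : Y → Y} {p : Z → Y} (hU : Continuous U) (hS : Continuous S)
    (hsurj : Function.Surjective p) (hp : Continuous p) (hfac : S ∘ p = p ∘ U)
    {ν : ProbabilityMeasure Y} (hν : ν ∈ invMeas S) {g : Y → ℝ} (hg : Continuous g) :
    ∃ lam ∈ invMeas U, ∫ y, g y ∂ν.toMeasure ≤ ∫ z, g (p z) ∂lam.toMeasure := by
  have hcont (n : ℕ) : Continuous (birkhoffAverage ℝ S g n) := by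
    unfold birkhoffAverage birkhoffSum
    exact (continuous_const (y := (n : ℝ)⁻¹)).smul
      (continuous_finsetSum _ fun k _ => hg.comp (hS.iterate k))
  have hex (n : ℕ) : ∃ z, ∫ y, g y ∂ν.toMeasure ≤ birkhoffAverage ℝ S g (n + 1) (p z) := by
    obtain ⟨y, hy⟩ := exists_integral_le (integrable_of_continuous ν.toMeasure (hcont (n + 1)))
    obtain ⟨z, rfl⟩ := hsurj y
    exact ⟨z, integral_birkhoffAverage hS hg hν n ▸ hy⟩
  choose z hz using hex
  obtain ⟨lam, hlam, hlim⟩ := exists_invMeas_tendsto hU z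
  refine ⟨lam, hlam, ge_of_tendsto' (hlim ⟨g ∘ p, hg.comp hp⟩) fun n => (hz n).trans_eq ?_⟩
  have hsemi : Function.Semiconj p U S := fun x => (congrFun hfac x).symm
  simp [birkhoffAverage, birkhoffSum, (hsemi.iterate_right _).eq]

section Factor

variable {Z Y : Type*}
  [TopologicalSpace Z] [CompactSpace Z] [TopologicalSpace.MetrizableSpace Z]
  [MeasurableSpace Z] [BorelSpace Z]
  [TopologicalSpace Y] [CompactSpace Y] [TopologicalSpace.MetrizableSpace Y]
  [MeasurableSpace Y] [BorelSpace Y]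
  {U : Z → Z} {S : Y → Y} {p : Z → Y}

/-- If no invariant measure in the fibre over `ν` has integral at most `c`, then `(ν, c)` can be
separated from the pairs `(p_* lam, ∫ f dlam)`. -/
lemma exists_separating (hU : Continuous U) (hp : Continuous p) {f : Z → ℝ} (hf : Continuous f)
    (ν : ProbabilityMeasure Y) (c : ℝ)
    (h : ∀ lam ∈ invMeas U, lam.toMeasure.map p = ν.toMeasure → c < ∫ z, f z ∂lam.toMeasure) :
    ∃ (g : C(Y, ℝ)) (s : ℝ), ∀ lam ∈ invMeas U, ∀ t ≤ c,
      ∫ z, g (p z) ∂lam.toMeasure + s * ∫ z, f z ∂lam.toMeasure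
        < ∫ y, g y ∂ν.toMeasure + s * t := by
  let Φ : ProbabilityMeasure Z → WeakFunctional Y × ℝ := fun lam =>
    (integralFunctional (lam.map hp.measurable.aemeasurable), ∫ z, f z ∂lam.toMeasure)
  have hΦ : Continuous Φ :=
    (continuous_integralFunctional.comp (ProbabilityMeasure.continuous_map hp)).prodMk
      (ProbabilityMeasure.continuous_integral_continuousMap (⟨f, hf⟩ : C(Z, ℝ)))
  have hconv : Convex ℝ (Φ '' invMeas U) := by
    rintro _ ⟨l₁, h₁, rfl⟩ _ ⟨l₂, h₂, rfl⟩ a b ha hb hab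
    obtain ⟨l, hl⟩ := exists_probabilityMeasure_add_smul l₁ l₂
      (a := ENNReal.ofReal a) (b := ENNReal.ofReal b)
      (by rw [← ENNReal.ofReal_add ha hb, hab, ENNReal.ofReal_one])
    have h_integral {g : Z → ℝ} (hg : Continuous g) : ∫ z, g z ∂l.toMeasure =
        a * ∫ z, g z ∂l₁.toMeasure + b * ∫ z, g z ∂l₂.toMeasure := by
      rw [hl, integral_add_smul _ _ ENNReal.ofReal_ne_top ENNReal.ofReal_ne_top hg,
        ENNReal.toReal_ofReal ha, ENNReal.toReal_ofReal hb]
    refine ⟨l, ?_, Prod.ext ?_ (h_integral hf)⟩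
    · change l.toMeasure.map U = l.toMeasure
      rw [hl, Measure.map_add _ _ hU.measurable, Measure.map_smul, Measure.map_smul,
        show l₁.toMeasure.map U = l₁.toMeasure from h₁,
        show l₂.toMeasure.map U = l₂.toMeasure from h₂]
    · refine LinearMap.ext (fun g => ?_ : ∀ g : C(Y, ℝ), _)
      have hmap (m : ProbabilityMeasure Z) :
          ∫ y, g y ∂(m.map hp.measurable.aemeasurable).toMeasure = ∫ z, g (p z) ∂m.toMeasure :=
        integral_map hp.measurable.aemeasurable g.continuous.aestronglyMeasurable
      change ∫ y, g y ∂(l.map hp.measurable.aemeasurable).toMeasure =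
        a * ∫ y, g y ∂(l₁.map hp.measurable.aemeasurable).toMeasure +
        b * ∫ y, g y ∂(l₂.map hp.measurable.aemeasurable).toMeasure
      rw [hmap, hmap, hmap]
      exact h_integral (g.continuous.comp hp)
  have hdisj : Disjoint (Φ '' invMeas U) ({integralFunctional ν} ×ˢ Set.Iic c) := by
    rw [Set.disjoint_left]
    rintro _ ⟨lam, hlam, rfl⟩ ⟨hmem, hle⟩
    exact (h lam hlam (congrArg ProbabilityMeasure.toMeasure
      (integralFunctional_injective hmem))).not_ge hle
  obtain ⟨φ, u, v, h₁, huv, h₂⟩ := geometric_hahn_banach_compact_closed hconv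
    ((isClosed_invMeas hU).isCompact.image hΦ) ((convex_singleton _).prod (convex_Iic c))
    (isClosed_singleton.prod isClosed_Iic) hdisj
  obtain ⟨g, hg⟩ := LinearMap.dualEmbedding_surjective
    (LinearMap.id : (C(Y, ℝ) →ₗ[ℝ] ℝ) →ₗ[ℝ] C(Y, ℝ) →ₗ[ℝ] ℝ)
    (φ.comp (ContinuousLinearMap.inl ℝ (WeakFunctional Y) ℝ))
  have hφ (m : ProbabilityMeasure Y) (t : ℝ) :
      φ (integralFunctional m, t) = ∫ y, g y ∂m.toMeasure + φ (0, 1) * t := by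
    have hsplit : ((integralFunctional m, t) : WeakFunctional Y × ℝ) =
        (integralFunctional m, 0) + t • (0, 1) := by simp
    rw [hsplit, map_add, map_smul, smul_eq_mul, mul_comm t]
    congr 1
    exact (congrArg (fun L : StrongDual ℝ (WeakFunctional Y) => L (integralFunctional m)) hg).symm
  refine ⟨g, φ (0, 1), fun lam hlam t ht => ?_⟩
  have i₁ := h₁ _ ⟨lam, hlam, rfl⟩
  have i₂ := h₂ (integralFunctional ν, t) ⟨rfl, ht⟩
  rw [hφ] at i₁ i₂
  rw [← integral_comp_of_map_eq hp (ν := lam.map hp.measurable.aemeasurable) rfl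
    g.continuous] at i₁
  linarith

/-- The push-forward map between the spaces of invariant measures of a factor map is onto. -/
lemma exists_invMeas_map_eq (hU : Continuous U) (hS : Continuous S)
    (hsurj : Function.Surjective p) (hp : Continuous p) (hfac : S ∘ p = p ∘ U)
    {ν : ProbabilityMeasure Y} (hν : ν ∈ invMeas S) :
    ∃ lam ∈ invMeas U, lam.toMeasure.map p = ν.toMeasure := by
  by_contra! hne
  obtain ⟨g, s, hg⟩ := exists_separating hU hp (f := fun _ => 0) continuous_const ν 0
    fun lam hlam heq => (hne lam hlam heq).elim
  obtain ⟨lam, hlam, hle⟩ := exists_invMeas_integral_comp_ge hU hS hsurj hp hfac hν g.continuous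
  have := hg lam hlam 0 le_rfl
  simp only [integral_zero, mul_zero, add_zero] at this
  exact this.not_ge hle

/-- Over an ergodic measure, some ergodic lift minimizes the integral of a continuous function
among all invariant lifts. -/
lemma exists_ergodic_lift_forall_integral_le (hU : Continuous U) (hS : Continuous S)
    (hsurj : Function.Surjective p) (hp : Continuous p) (hfac : S ∘ p = p ∘ U)
    {f : Z → ℝ} (hf : Continuous f) {ν : ProbabilityMeasure Y}
    (hν : Ergodic S ν.toMeasure) :
    ∃ lam ∈ invMeas U, Ergodic U lam.toMeasure ∧ lam.toMeasure.map p = ν.toMeasure ∧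
      ∀ m ∈ invMeas U, m.toMeasure.map p = ν.toMeasure →
        ∫ z, f z ∂lam.toMeasure ≤ ∫ z, f z ∂m.toMeasure := by
  have hcont : Continuous fun μ : ProbabilityMeasure Z => ∫ x, f x ∂μ.toMeasure :=
    ProbabilityMeasure.continuous_integral_continuousMap (⟨f, hf⟩ : C(Z, ℝ))
  have hcl : IsClosed {lam | lam ∈ invMeas U ∧ lam.toMeasure.map p = ν.toMeasure} :=
    (isClosed_invMeas hU).inter (isClosed_setOf_map_eq hp ν)
  obtain ⟨m, ⟨hm, hmν⟩, hmin⟩ := hcl.isCompact.exists_isMinOn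
    (exists_invMeas_map_eq hU hS hsurj hp hfac hν.map_eq) hcont.continuousOn
  have hmin' : ∀ l ∈ invMeas U, l.toMeasure.map p = ν.toMeasure →
      ∫ z, f z ∂m.toMeasure ≤ ∫ z, f z ∂l.toMeasure := fun l hl hlν => hmin ⟨hl, hlν⟩
  obtain ⟨lam, ⟨⟨hlam, hlamν⟩, heq⟩, herg⟩ := exists_ergodic_of_face hU
    (A := {l | (l ∈ invMeas U ∧ l.toMeasure.map p = ν.toMeasure) ∧
      ∫ x, f x ∂l.toMeasure = ∫ x, f x ∂m.toMeasure})
    (hcl.inter (isClosed_eq hcont continuous_const))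
    ⟨m, ⟨hm, hmν⟩, rfl⟩ (fun _ h => h.1.1) (by
      rintro l₁ h₁ l₂ h₂ l ⟨⟨-, hlν⟩, hl⟩ a b ha hb hab h
      have ha' : a ≠ ∞ := ne_top_of_le_ne_top ENNReal.one_ne_top (hab ▸ le_self_add)
      have hb' : b ≠ ∞ := ne_top_of_le_ne_top ENNReal.one_ne_top (hab ▸ le_add_self)
      rw [← h, Measure.map_add _ _ hp.measurable, Measure.map_smul, Measure.map_smul] at hlν
      have mp {k : ProbabilityMeasure Z} (hk : k ∈ invMeas U) :
          MeasurePreserving S (k.toMeasure.map p) (k.toMeasure.map p) ∧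
            IsProbabilityMeasure (k.toMeasure.map p) :=
        ⟨⟨hS.measurable, map_mem_invMeas hU hS hp hfac hk
          (ν := k.map hp.measurable.aemeasurable) rfl⟩,
          Measure.isProbabilityMeasure_map hp.measurable.aemeasurable⟩
      obtain ⟨e₁, e₂⟩ := (mem_extremePoints.1 hν.mem_extremePoints).2 _ (mp h₁) _ (mp h₂)
        ⟨a, b, ha, hb, hab, hlν⟩
      rw [← h, integral_add_smul _ _ ha' hb' hf] at hl
      have hpa := ENNReal.toReal_pos ha.ne' ha'
      have hpb := ENNReal.toReal_pos hb.ne' hb'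
      have hsum : a.toReal + b.toReal = 1 := by
        rw [← ENNReal.toReal_add ha' hb', hab, ENNReal.toReal_one]
      have i₁ := hmin' l₁ h₁ e₁
      have i₂ := hmin' l₂ h₂ e₂
      obtain ⟨j₁, j₂⟩ := eq_and_eq_of_convex_combination hpa hpb hsum
        (neg_le_neg i₁) (neg_le_neg i₂) (by linarith)
      exact ⟨⟨⟨h₁, e₁⟩, neg_inj.1 j₁⟩, ⟨⟨h₂, e₂⟩, neg_inj.1 j₂⟩⟩)
  exact ⟨lam, hlam, herg, hlamν, fun l hl hlν => heq ▸ hmin' l hl hlν⟩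

/-- Below any value of `psi` there is an affine function, given by integration of a continuous
function on the base, which minorizes `psi`. -/
lemma exists_minorant (hU : Continuous U) (hS : Continuous S)
    (hsurj : Function.Surjective p) (hp : Continuous p) (hfac : S ∘ p = p ∘ U)
    {f : Z → ℝ} (hf : Continuous f) {ν : ProbabilityMeasure Y} (hν : ν ∈ invMeas S)
    {c : ℝ} (hc : c < psi U p f ν) :
    ∃ g : C(Y, ℝ), c ≤ ∫ y, g y ∂ν.toMeasure ∧
      ∀ lam ∈ invMeas U, ∫ z, g (p z) ∂lam.toMeasure ≤ ∫ z, f z ∂lam.toMeasure := by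
  obtain ⟨g, s, hg⟩ := exists_separating hU hp hf ν c
    fun lam hlam h => hc.trans_le (psi_le hf hlam h)
  obtain ⟨l, hl, hlν⟩ := exists_invMeas_map_eq hU hS hsurj hp hfac hν
  have hs : s < 0 := by
    have h₁ := hg l hl c le_rfl
    rw [integral_comp_of_map_eq hp hlν g.continuous] at h₁
    have h₂ := hc.trans_le (psi_le hf hl hlν)
    nlinarith
  set k : ℝ := ∫ y, g y ∂ν.toMeasure + s * c with hk
  have h_integral (m : ProbabilityMeasure Z) {w : Z → ℝ} (hw : Continuous w) :
      ∫ x, (k - w x) / s ∂m.toMeasure = (k - ∫ x, w x ∂m.toMeasure) / s := by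
    rw [integral_div, integral_sub (integrable_const _) (integrable_of_continuous _ hw)]
    simp
  refine ⟨⟨fun y => (k - g y) / s, by fun_prop⟩, ?_, fun lam hlam => ?_⟩
  · change c ≤ ∫ y, (k - g y) / s ∂ν.toMeasure
    rw [← integral_comp_of_map_eq hp hlν (g := fun y => (k - g y) / s) (by fun_prop),
      h_integral l (w := fun z => g (p z)) (g.continuous.comp hp),
      integral_comp_of_map_eq hp hlν g.continuous, hk, add_sub_cancel_left,
      mul_div_cancel_left₀ _ hs.ne]
  · change ∫ z, (k - g (p z)) / s ∂lam.toMeasure ≤ _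
    rw [h_integral lam (w := fun z => g (p z)) (g.continuous.comp hp), div_le_iff_of_neg hs]
    linarith [hg lam hlam c le_rfl]

/-- Every value of `psi` is approximated from below by its values at ergodic measures. -/
lemma exists_ergodic_le_psi (hU : Continuous U) (hS : Continuous S)
    (hsurj : Function.Surjective p) (hp : Continuous p) (hfac : S ∘ p = p ∘ U)
    {f : Z → ℝ} (hf : Continuous f) {ν : ProbabilityMeasure Y} (hν : ν ∈ invMeas S)
    {c : ℝ} (hc : c < psi U p f ν) :
    ∃ ν' ∈ invMeas S, Ergodic S ν'.toMeasure ∧ c ≤ psi U p f ν' := by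
  obtain ⟨g, hcg, hg⟩ := exists_minorant hU hS hsurj hp hfac hf hν hc
  obtain ⟨ν', hν', herg, hle⟩ := exists_ergodic_integral_ge hS g.continuous hν
  obtain ⟨l, hl, hlν⟩ := exists_invMeas_map_eq hU hS hsurj hp hfac hν'
  refine ⟨ν', hν', herg, le_csInf ⟨_, l, hl, hlν, rfl⟩ ?_⟩
  rintro _ ⟨lam, hlam, h, rfl⟩
  calc c ≤ ∫ y, g y ∂ν'.toMeasure := hcg.trans hle
    _ = ∫ z, g (p z) ∂lam.toMeasure := (integral_comp_of_map_eq hp h g.continuous).symm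
    _ ≤ ∫ z, f z ∂lam.toMeasure := hg lam hlam

lemma alphaF_eq_sSup_ergodic (hU : Continuous U) (hS : Continuous S)
    (hsurj : Function.Surjective p) (hp : Continuous p) (hfac : S ∘ p = p ∘ U)
    {f : Z → ℝ} (hf : Continuous f) :
    alphaF U S p f
      = sSup {r | ∃ ν ∈ invMeas S, Ergodic S ν.toMeasure ∧ r = psi U p f ν} := by
  have hbdd : BddAbove {r | ∃ ν ∈ invMeas S, r = psi U p f ν} := by
    refine ⟨‖(⟨f, hf⟩ : C(Z, ℝ))‖, ?_⟩
    rintro _ ⟨ν, hν, rfl⟩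
    obtain ⟨l, hl, hlν⟩ := exists_invMeas_map_eq hU hS hsurj hp hfac hν
    exact (psi_le hf hl hlν).trans (abs_le.1 (abs_integral_le_norm hf l)).2
  have hsub : {r | ∃ ν ∈ invMeas S, Ergodic S ν.toMeasure ∧ r = psi U p f ν} ⊆
      {r | ∃ ν ∈ invMeas S, r = psi U p f ν} := fun r ⟨ν, hν, _, h⟩ => ⟨ν, hν, h⟩
  unfold alphaF
  obtain hempty | ⟨r, ν, hν, -⟩ :=
    {r | ∃ ν ∈ invMeas S, r = psi U p f ν}.eq_empty_or_nonempty
  · rw [hempty, Set.subset_eq_empty hsub hempty]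
  · obtain ⟨ν', hν', herg, -⟩ := exists_ergodic_integral_ge hS (g := fun _ => 0)
      continuous_const hν
    refine le_antisymm (csSup_le ⟨_, ν, hν, rfl⟩ ?_)
      (csSup_le_csSup hbdd ⟨_, ν', hν', herg, rfl⟩ hsub)
    rintro _ ⟨μ, hμ, rfl⟩
    refine le_of_forall_lt_imp_le_of_dense fun c hc => ?_
    obtain ⟨μ', hμ', herg', hle⟩ := exists_ergodic_le_psi hU hS hsurj hp hfac hf hμ hc
    exact hle.trans (le_csSup (hbdd.mono hsub) ⟨μ', hμ', herg', rfl⟩)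

/-- Over an ergodic measure, the minimum defining `psi` may be taken over ergodic lifts. -/
lemma psi_eq_sInf_ergodic (hU : Continuous U) (hS : Continuous S)
    (hsurj : Function.Surjective p) (hp : Continuous p) (hfac : S ∘ p = p ∘ U)
    {f : Z → ℝ} (hf : Continuous f) {ν : ProbabilityMeasure Y} (hν : Ergodic S ν.toMeasure) :
    psi U p f ν = sInf {t | ∃ lam ∈ invMeas U, Ergodic U lam.toMeasure ∧
      lam.toMeasure.map p = ν.toMeasure ∧ t = ∫ z, f z ∂lam.toMeasure} := by
  obtain ⟨lam, hlam, herg, hlamν, hmin⟩ :=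
    exists_ergodic_lift_forall_integral_le hU hS hsurj hp hfac hf hν
  have h₁ : IsLeast {r | ∃ lam ∈ invMeas U, lam.toMeasure.map p = ν.toMeasure ∧
      r = ∫ z, f z ∂lam.toMeasure} (∫ z, f z ∂lam.toMeasure) :=
    ⟨⟨lam, hlam, hlamν, rfl⟩, fun _ ⟨m, hm, hmν, h⟩ => h ▸ hmin m hm hmν⟩
  have h₂ : IsLeast {t | ∃ lam ∈ invMeas U, Ergodic U lam.toMeasure ∧
      lam.toMeasure.map p = ν.toMeasure ∧ t = ∫ z, f z ∂lam.toMeasure}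
      (∫ z, f z ∂lam.toMeasure) :=
    ⟨⟨lam, hlam, herg, hlamν, rfl⟩, fun _ ⟨m, hm, _, hmν, h⟩ => h ▸ hmin m hm hmν⟩
  rw [psi, h₁.csInf_eq, h₂.csInf_eq]

end Factor

/-- `α(f)` equals the supremum of `ψ_f` over ergodic `ν`, and also the
supremum over ergodic `ν` of the infimum of `∫ f dλ` over ergodic `λ ∈ M_U(Z)` with
`π_* λ = ν`. -/
theorem stmt2
    {Z Y : Type*}
    [TopologicalSpace Z] [CompactSpace Z] [TopologicalSpace.MetrizableSpace Z]
    [MeasurableSpace Z] [BorelSpace Z]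
    [TopologicalSpace Y] [CompactSpace Y] [TopologicalSpace.MetrizableSpace Y]
    [MeasurableSpace Y] [BorelSpace Y]
    (U : Z ≃ₜ Z) (S : Y ≃ₜ Y) (π : Z → Y)
    (hπcont : Continuous π) (hπsurj : Function.Surjective π)
    (hfactor : ⇑S ∘ π = π ∘ ⇑U)
    (f : Z → ℝ) (hf : Continuous f) :
    alphaF (⇑U) (⇑S) π f
      = sSup {r | ∃ ν ∈ invMeas ⇑S, Ergodic (⇑S) ν.toMeasure ∧ r = psi (⇑U) π f ν} ∧
    alphaF (⇑U) (⇑S) π f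
      = sSup {r | ∃ ν ∈ invMeas ⇑S, Ergodic (⇑S) ν.toMeasure ∧
          r = sInf {t | ∃ lam ∈ invMeas ⇑U, Ergodic (⇑U) lam.toMeasure ∧
            lam.toMeasure.map π = ν.toMeasure ∧ t = ∫ z, f z ∂lam.toMeasure}} := by
  have hα := alphaF_eq_sSup_ergodic U.continuous S.continuous hπsurj hπcont hfactor hf
  refine ⟨hα, hα.trans (congrArg sSup (Set.ext fun r => ?_))⟩
  refine exists_congr fun ν => and_congr_right fun _ => and_congr_right fun herg => ?_
  rw [psi_eq_sInf_ergodic U.continuous S.continuous hπsurj hπcont hfactor hf herg]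
end
end

section
/- Let (X, T) and (Y, S) be topological dynamical systems and f ∈ C(X × Y). If (X, T) and (Y, S) both have the periodic specification property, then α(f) = γ(f) = δ(f) ≤ β(f). -/
open MeasureTheory Filter Topology
open scoped ENNReal NNReal

noncomputable section

/-- Birkhoff average `A_k f(x, y) = (1/k) Σ_{j<k} f(T^j x, S^j y)`. -/
def birk2 {X Y : Type*} (T : X → X) (S : Y → Y) (f : X × Y → ℝ) (k : ℕ) (x : X) (y : Y) : ℝ :=
  (k : ℝ)⁻¹ * ∑ j ∈ Finset.range k, f ((Prod.map T S)^[j] (x, y))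

/-- `ψ_f(ν) = min { ∫ f dλ : λ ∈ M_{T×S}(X × Y), (π_Y)_* λ = ν }`. -/
def psi2 {X Y : Type*} [MeasurableSpace X] [MeasurableSpace Y]
    (T : X → X) (S : Y → Y) (f : X × Y → ℝ) (ν : ProbabilityMeasure Y) : ℝ :=
  sInf {r | ∃ lam ∈ invMeas (Prod.map T S), lam.toMeasure.map Prod.snd = ν.toMeasure ∧
    r = ∫ p, f p ∂lam.toMeasure}

/-- `α(f) = sup_{ν ∈ M_S(Y)} ψ_f(ν)`. -/
def alpha2 {X Y : Type*} [MeasurableSpace X] [MeasurableSpace Y]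
    (T : X → X) (S : Y → Y) (f : X × Y → ℝ) : ℝ :=
  sSup {r | ∃ ν ∈ invMeas S, r = psi2 T S f ν}

/-- `R_f`: points `(x, y)` whose Birkhoff averages converge. -/
def reg2 {X Y : Type*} (T : X → X) (S : Y → Y) (f : X × Y → ℝ) : Set (X × Y) :=
  {p | ∃ L : ℝ, Tendsto (fun k : ℕ => birk2 T S f k p.1 p.2) atTop (𝓝 L)}

/-- `β(f) = sup_{y ∈ π_Y(R_f)} inf_{(x,y) ∈ R_f} lim_k A_k f(x, y)`. -/
def beta2 {X Y : Type*} (T : X → X) (S : Y → Y) (f : X × Y → ℝ) : ℝ :=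
  sSup {r | ∃ y : Y, (∃ x : X, (x, y) ∈ reg2 T S f) ∧
    r = sInf {L | ∃ x : X, (x, y) ∈ reg2 T S f ∧
      Tendsto (fun k : ℕ => birk2 T S f k x y) atTop (𝓝 L)}}

/-- `γ(f) = sup_{y ∈ Y} inf_{x ∈ X} limsup_k A_k f(x, y)`. -/
def gamma2 {X Y : Type*} (T : X → X) (S : Y → Y) (f : X × Y → ℝ) : ℝ :=
  ⨆ y : Y, ⨅ x : X, limsup (fun k : ℕ => birk2 T S f k x y) atTop

/-- `δ(f) = limsup_k max_{y ∈ Y} min_{x ∈ X} A_k f(x, y)`. -/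
def delta2 {X Y : Type*} (T : X → X) (S : Y → Y) (f : X × Y → ℝ) : ℝ :=
  limsup (fun k : ℕ => ⨆ y : Y, ⨅ x : X, birk2 T S f k x y) atTop

/-- The invariant probability measures supported on a single closed (periodic) orbit. -/
def Mco {Z : Type*} [MeasurableSpace Z] (U : Z → Z) : Set (ProbabilityMeasure Z) :=
  {μ | ∃ (k : ℕ) (z : Z), 0 < k ∧ U^[k] z = z ∧
    μ.toMeasure = (k : ℝ≥0∞)⁻¹ • ∑ j ∈ Finset.range k, Measure.dirac (U^[j] z)}

/-- `α_per(f)`: as `α(f)`, but with both measures ranging over closed-orbit measures. -/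
def alphaPer2 {X Y : Type*} [MeasurableSpace X] [MeasurableSpace Y]
    (T : X → X) (S : Y → Y) (f : X × Y → ℝ) : ℝ :=
  sSup {r | ∃ ν ∈ Mco S,
    r = sInf {t | ∃ lam ∈ Mco (Prod.map T S), lam.toMeasure.map Prod.snd = ν.toMeasure ∧
      t = ∫ p, f p ∂lam.toMeasure}}

/-- The set of periodic points. -/
def perPts {Z : Type*} (U : Z → Z) : Set Z :=
  {z | ∃ t : ℕ, 0 < t ∧ U^[t] z = z}

/-- `δ_per(f) = limsup_k sup_{y ∈ Per_S(Y)} inf_{x ∈ Per_T(X)} A_k f(x, y)`. -/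
def deltaPer2 {X Y : Type*} (T : X → X) (S : Y → Y) (f : X × Y → ℝ) : ℝ :=
  limsup (fun k : ℕ => sSup {r | ∃ y ∈ perPts S,
    r = sInf {t | ∃ x ∈ perPts T, t = birk2 T S f k x y}}) atTop

/-- The `j`-th power (`j : ℤ`) of a homeomorphism, applied to a point. -/
def zit {X : Type*} [TopologicalSpace X] (T : X ≃ₜ X) (j : ℤ) (x : X) : X :=
  (T.toEquiv ^ j) x

/-- The specification property for `(X, T)` (with respect to the metric of `X`):
for every `η > 0` there is `D = D(η)` such that every `D`-spaced specification
`ξ = (x_i, [a_i, b_i])_{i=1}^n` admits an `η`-tracing point. -/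
def SpecProp {X : Type*} [MetricSpace X] (T : X ≃ₜ X) : Prop :=
  ∀ η : ℝ, 0 < η → ∃ D : ℕ, 0 < D ∧
    ∀ (n : ℕ) (x : Fin (n + 1) → X) (a b : Fin (n + 1) → ℤ),
      (∀ i, a i ≤ b i) →
      (∀ i : Fin n, (D : ℤ) ≤ a i.succ - b i.castSucc) →
      ∃ x' : X, ∀ i : Fin (n + 1), ∀ j : ℤ, a i ≤ j → j ≤ b i →
        dist (zit T j x') (zit T j (x i)) < η

/-- The periodic specification property for `(X, T)`: as `SpecProp`, but the tracing
point can moreover be chosen of period `b_n - a_1 + D`. -/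
def PerSpecProp {X : Type*} [MetricSpace X] (T : X ≃ₜ X) : Prop :=
  ∀ η : ℝ, 0 < η → ∃ D : ℕ, 0 < D ∧
    ∀ (n : ℕ) (x : Fin (n + 1) → X) (a b : Fin (n + 1) → ℤ),
      (∀ i, a i ≤ b i) →
      (∀ i : Fin n, (D : ℤ) ≤ a i.succ - b i.castSucc) →
      ∃ x' : X, (∀ i : Fin (n + 1), ∀ j : ℤ, a i ≤ j → j ≤ b i →
          dist (zit T j x') (zit T j (x i)) < η) ∧
        zit T (b (Fin.last n) - a 0 + (D : ℤ)) x' = x'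

section Tracing

variable {X : Type*} [TopologicalSpace X]

lemma zit_natCast (T : X ≃ₜ X) (n : ℕ) (x : X) : zit T n x = T^[n] x := by
  rw [zit, zpow_natCast, ← Equiv.Perm.iterate_eq_pow]
  rfl

lemma zit_add (T : X ≃ₜ X) (m n : ℤ) (x : X) : zit T (m + n) x = zit T m (zit T n x) := by
  simp [zit, zpow_add]

end Tracing

/-- Periodic specification for a single orbit segment. -/
lemma PerSpecProp.exists_periodic_tracing {X : Type*} [MetricSpace X] {T : X ≃ₜ X}
    (h : PerSpecProp T) {η : ℝ} (hη : 0 < η) :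
    ∃ D : ℕ, ∀ k : ℕ, 0 < k → ∀ x : X, ∃ x' : X,
      (∀ j < k, dist (T^[j] x') (T^[j] x) < η) ∧ T^[k + D] x' = x' := by
  obtain ⟨D, hD, H⟩ := h η hη
  refine ⟨D - 1, fun k hk x => ?_⟩
  obtain ⟨x', h1, h2⟩ := H 0 (fun _ => x) (fun _ => 0) (fun _ => ((k - 1 : ℕ) : ℤ))
    (fun _ => by positivity) (fun i => i.elim0)
  refine ⟨x', fun j hj => ?_, ?_⟩
  · have := h1 0 j (by positivity) (by omega)
    simpa only [zit_natCast] using this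
  · have e : ((k - 1 : ℕ) : ℤ) - 0 + (D : ℤ) = ((k + (D - 1) : ℕ) : ℤ) := by omega
    rw [e, zit_natCast] at h2
    exact h2

/-- Specification for infinitely many equally spaced orbit segments of the same length. -/
lemma PerSpecProp.exists_tracing_seq {X : Type*} [MetricSpace X] [CompactSpace X] {T : X ≃ₜ X}
    (h : PerSpecProp T) {η : ℝ} (hη : 0 < η) :
    ∃ D : ℕ, ∀ L : ℕ, 0 < L → ∀ z : ℕ → X, ∃ x' : X,
      ∀ i, ∀ j < L, dist (T^[j] (T^[i * (L + D)] x')) (T^[j] (z i)) ≤ η := by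
  obtain ⟨D, hD, H⟩ := h η hη
  refine ⟨D, fun L hL z => ?_⟩
  have hcl : ∀ i, IsClosed
      {x' : X | ∀ j < L, dist (T^[j] (T^[i * (L + D)] x')) (T^[j] (z i)) ≤ η} := by
    intro i
    simp only [Set.ofPred_forall]
    refine isClosed_iInter fun j => isClosed_iInter fun _ => isClosed_le ?_ continuous_const
    exact ((T.continuous.iterate j).comp (T.continuous.iterate _)).dist continuous_const
  have hcl' : ∀ n : ℕ, IsClosed (⋂ i ≤ n,
      {x' : X | ∀ j < L, dist (T^[j] (T^[i * (L + D)] x')) (T^[j] (z i)) ≤ η}) :=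
    fun n => isClosed_iInter fun i => isClosed_iInter fun _ => hcl i
  obtain ⟨x', hx'⟩ := IsCompact.nonempty_iInter_of_sequence_nonempty_isCompact_isClosed
    (fun n : ℕ => ⋂ i ≤ n,
      {x' : X | ∀ j < L, dist (T^[j] (T^[i * (L + D)] x')) (T^[j] (z i)) ≤ η})
    (fun n => Set.biInter_mono (fun i (hi : i ≤ n) => Nat.le_succ_of_le hi) fun _ _ => le_rfl)
    (fun n => by
      obtain ⟨x', h1, -⟩ := H n (fun i => zit T (-((i * (L + D) : ℕ) : ℤ)) (z i))
        (fun i => ((i * (L + D) : ℕ) : ℤ)) (fun i => ((i * (L + D) + (L - 1) : ℕ) : ℤ))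
        (fun i => by omega)
        (fun i => by
          simp only [Fin.val_succ, Fin.val_castSucc, add_mul]
          omega)
      refine ⟨x', ?_⟩
      simp only [Set.mem_iInter, Set.mem_ofPred_eq]
      intro i hi j hj
      have := h1 ⟨i, by omega⟩ ((j + i * (L + D) : ℕ) : ℤ) (by push_cast; omega)
        (by dsimp only; omega)
      rw [zit_natCast, Function.iterate_add_apply, ← zit_add] at this
      have e : ((j + i * (L + D) : ℕ) : ℤ) + -((i * (L + D) : ℕ) : ℤ) = (j : ℤ) := by omega
      simp only [e, zit_natCast] at this
      exact this.le)
    (hcl' 0).isCompact hcl'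
  refine ⟨x', fun i => ?_⟩
  simp only [Set.mem_iInter, Set.mem_ofPred_eq] at hx'
  exact hx' i i le_rfl

section BirkhoffSum

variable {Z : Type*} {R : Z → Z} {f : Z → ℝ} {C c : ℝ}

lemma abs_birkhoffSum_le (hC : ∀ z, |f z| ≤ C) (k : ℕ) (z : Z) :
    |birkhoffSum R f k z| ≤ k * C := by
  refine (Finset.abs_sum_le_sum_abs _ _).trans ?_
  simpa using Finset.sum_le_card_nsmul (Finset.range k) _ C fun j _ => hC (R^[j] z)

lemma birkhoffSum_le_of_blocks (hC : ∀ z, |f z| ≤ C) {P : ℕ} {z : Z} (hP : 0 < P)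
    (h : ∀ m : ℕ, birkhoffSum R f P (R^[m * P] z) ≤ P * c) (k : ℕ) :
    birkhoffSum R f k z ≤ k * c + P * (C + |c|) := by
  have hblocks : ∀ m : ℕ, birkhoffSum R f (m * P) z ≤ (m * P : ℕ) * c := by
    intro m
    induction m with
    | zero => simp
    | succ m ih =>
      rw [add_mul, one_mul, birkhoffSum_add, Nat.cast_add, add_mul]
      exact add_le_add ih (h m)
  have hk : k / P * P + k % P = k := Nat.div_add_mod' k P
  have hr : ((k % P : ℕ) : ℝ) ≤ P := by exact_mod_cast (Nat.mod_lt k hP).le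
  have h1 := hblocks (k / P)
  have h2 := (le_abs_self _).trans (abs_birkhoffSum_le (R := R) hC (k % P) (R^[k / P * P] z))
  have h3 : birkhoffSum R f k z =
      birkhoffSum R f (k / P * P) z + birkhoffSum R f (k % P) (R^[k / P * P] z) := by
    rw [← birkhoffSum_add, hk]
  have h4 : (k : ℝ) = ((k / P * P : ℕ) : ℝ) + ((k % P : ℕ) : ℝ) := by exact_mod_cast hk.symm
  have hC0 : 0 ≤ C := (abs_nonneg _).trans (hC z)
  have h5 : ((k % P : ℕ) : ℝ) * (C + |c|) ≤ P * (C + |c|) := by gcongr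
  have h6 : -(((k % P : ℕ) : ℝ) * c) ≤ ((k % P : ℕ) : ℝ) * |c| := by
    rw [← mul_neg]
    exact mul_le_mul_of_nonneg_left (neg_le_abs c) (Nat.cast_nonneg _)
  rw [h3, h4]
  linarith

lemma le_birkhoffSum_of_blocks (hC : ∀ z, |f z| ≤ C) {P : ℕ} {z : Z} (hP : 0 < P)
    (h : ∀ m : ℕ, P * c ≤ birkhoffSum R f P (R^[m * P] z)) (k : ℕ) :
    k * c - P * (C + |c|) ≤ birkhoffSum R f k z := by
  have hneg : ∀ n w, birkhoffSum R (fun z => -f z) n w = -birkhoffSum R f n w := fun n w => by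
    simp [birkhoffSum]
  have := birkhoffSum_le_of_blocks (R := R) (f := fun z => -f z) (c := -c) (z := z)
    (fun z => by simpa using hC z) hP (fun m => by rw [hneg]; linarith [h m]) k
  rw [hneg, abs_neg] at this
  linarith

lemma tendsto_add_const_div (c K : ℝ) :
    Tendsto (fun k : ℕ => c + K / (k : ℝ)) atTop (𝓝 c) := by
  simpa using (tendsto_const_div_atTop_nhds_zero_nat K).const_add c

lemma inv_mul_le_of_le {k : ℕ} (hk : 0 < k) {s K : ℝ} (h : s ≤ k * c + K) :
    (k : ℝ)⁻¹ * s ≤ c + K / k := by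
  have hk' : (0 : ℝ) < k := by exact_mod_cast hk
  rw [inv_mul_le_iff₀ hk', mul_add, mul_div_cancel₀ _ hk'.ne']
  exact h

lemma le_inv_mul_of_le {k : ℕ} (hk : 0 < k) {s K : ℝ} (h : k * c - K ≤ s) :
    c + -K / k ≤ (k : ℝ)⁻¹ * s := by
  have hk' : (0 : ℝ) < k := by exact_mod_cast hk
  rw [le_inv_mul_iff₀ hk', mul_add, mul_div_cancel₀ _ hk'.ne']
  linarith

lemma exists_tendsto_of_periodic (hC : ∀ z, |f z| ≤ C) {P : ℕ} {z : Z} (hP : 0 < P)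
    (hz : R^[P] z = z) :
    ∃ L, Tendsto (fun k : ℕ => (k : ℝ)⁻¹ * birkhoffSum R f k z) atTop (𝓝 L) := by
  have hP' : (P : ℝ) ≠ 0 := by exact_mod_cast hP.ne'
  have hper : ∀ m : ℕ, R^[m * P] z = z := fun m =>
    (Function.IsPeriodicPt.const_mul (show Function.IsPeriodicPt R P z from hz) m)
  have hb : ∀ m : ℕ, birkhoffSum R f P (R^[m * P] z) = P * (birkhoffSum R f P z / P) := fun m => by
    rw [hper, mul_div_cancel₀ _ hP']
  refine ⟨birkhoffSum R f P z / P, tendsto_of_tendsto_of_tendsto_of_le_of_le'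
    (tendsto_add_const_div _ (-(P * (C + |birkhoffSum R f P z / P|))))
    (tendsto_add_const_div _ (P * (C + |birkhoffSum R f P z / P|))) ?_ ?_⟩
  · filter_upwards [eventually_gt_atTop 0] with k hk
    exact le_inv_mul_of_le hk (le_birkhoffSum_of_blocks hC hP (fun m => (hb m).ge) k)
  · filter_upwards [eventually_gt_atTop 0] with k hk
    exact inv_mul_le_of_le hk (birkhoffSum_le_of_blocks hC hP (fun m => (hb m).le) k)

end BirkhoffSum

section Averages

variable {X Y : Type*} {T : X → X} {S : Y → Y} {f : X × Y → ℝ} {C c : ℝ}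

lemma iterate_prodMap (n : ℕ) (x : X) (y : Y) :
    (Prod.map T S)^[n] (x, y) = (T^[n] x, S^[n] y) := by
  rw [Prod.map_iterate]
  rfl

lemma birk2_eq (k : ℕ) (x : X) (y : Y) :
    birk2 T S f k x y = (k : ℝ)⁻¹ * birkhoffSum (Prod.map T S) f k (x, y) := rfl

lemma abs_birk2_le (hC : ∀ p, |f p| ≤ C) (k : ℕ) (x : X) (y : Y) : |birk2 T S f k x y| ≤ C := by
  have hC0 : 0 ≤ C := (abs_nonneg _).trans (hC (x, y))
  rcases k.eq_zero_or_pos with rfl | hk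
  · simpa [birk2] using hC0
  · have hk' : (0 : ℝ) < k := by exact_mod_cast hk
    rw [birk2_eq, abs_mul, abs_of_pos (inv_pos.2 hk'), inv_mul_le_iff₀ hk']
    exact abs_birkhoffSum_le hC k _

lemma bddBelow_birk2 (hC : ∀ p, |f p| ≤ C) (k : ℕ) (y : Y) :
    BddBelow (Set.range fun x => birk2 T S f k x y) :=
  ⟨-C, by rintro _ ⟨x, rfl⟩; exact neg_le_of_abs_le (abs_birk2_le hC k x y)⟩

lemma abs_iInf_birk2_le [Nonempty X] (hC : ∀ p, |f p| ≤ C) (k : ℕ) (y : Y) :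
    |⨅ x, birk2 T S f k x y| ≤ C :=
  abs_le.2 ⟨le_ciInf fun x => neg_le_of_abs_le (abs_birk2_le hC k x y),
    ciInf_le_of_le (bddBelow_birk2 hC k y) (Classical.arbitrary X)
      (le_of_abs_le (abs_birk2_le hC k _ y))⟩

lemma bddAbove_iInf_birk2 [Nonempty X] (hC : ∀ p, |f p| ≤ C) (k : ℕ) :
    BddAbove (Set.range fun y => ⨅ x, birk2 T S f k x y) :=
  ⟨C, by rintro _ ⟨y, rfl⟩; exact le_of_abs_le (abs_iInf_birk2_le hC k y)⟩

lemma abs_iSup_iInf_birk2_le [Nonempty X] [Nonempty Y] (hC : ∀ p, |f p| ≤ C) (k : ℕ) :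
    |⨆ y, ⨅ x, birk2 T S f k x y| ≤ C :=
  abs_le.2 ⟨le_ciSup_of_le (bddAbove_iInf_birk2 hC k) (Classical.arbitrary Y)
      (neg_le_of_abs_le (abs_iInf_birk2_le hC k _)),
    ciSup_le fun y => le_of_abs_le (abs_iInf_birk2_le hC k y)⟩

lemma isBoundedUnder_le_of_abs_le {u : ℕ → ℝ} (h : ∀ k, |u k| ≤ C) :
    IsBoundedUnder (· ≤ ·) atTop u :=
  isBoundedUnder_of ⟨C, fun k => le_of_abs_le (h k)⟩

lemma isCoboundedUnder_le_of_abs_le {u : ℕ → ℝ} (h : ∀ k, |u k| ≤ C) :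
    IsCoboundedUnder (· ≤ ·) atTop u :=
  (isBoundedUnder_of (r := (· ≥ ·)) ⟨-C, fun k => neg_le_of_abs_le (h k)⟩).isCoboundedUnder_le

lemma abs_limsup_le {u : ℕ → ℝ} (h : ∀ k, |u k| ≤ C) : |limsup u atTop| ≤ C :=
  abs_le.2 ⟨le_limsup_of_frequently_le
      (Eventually.of_forall fun k => neg_le_of_abs_le (h k)).frequently
      (isBoundedUnder_le_of_abs_le h),
    limsup_le_of_le (isCoboundedUnder_le_of_abs_le h)
      (Eventually.of_forall fun k => le_of_abs_le (h k))⟩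

lemma limsup_birk2_le (hC : ∀ p, |f p| ≤ C) {x : X} {y : Y} {K : ℝ}
    (h : ∀ k : ℕ, birkhoffSum (Prod.map T S) f k (x, y) ≤ k * c + K) :
    limsup (fun k => birk2 T S f k x y) atTop ≤ c := by
  rw [← (tendsto_add_const_div c K).limsup_eq]
  refine limsup_le_limsup ?_ (isCoboundedUnder_le_of_abs_le fun k => abs_birk2_le hC k x y)
    (tendsto_add_const_div c K).isBoundedUnder_le
  filter_upwards [eventually_gt_atTop 0] with k hk
  exact inv_mul_le_of_le hk (h k)

lemma le_limsup_birk2 (hC : ∀ p, |f p| ≤ C) {x : X} {y : Y} {K : ℝ}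
    (h : ∀ k : ℕ, k * c - K ≤ birkhoffSum (Prod.map T S) f k (x, y)) :
    c ≤ limsup (fun k => birk2 T S f k x y) atTop := by
  rw [← (tendsto_add_const_div c (-K)).limsup_eq]
  refine limsup_le_limsup ?_ (tendsto_add_const_div c (-K)).isCoboundedUnder_le
    (isBoundedUnder_le_of_abs_le fun k => abs_birk2_le hC k x y)
  filter_upwards [eventually_gt_atTop 0] with k hk
  exact le_inv_mul_of_le hk (h k)

/-- Above `δ(f)`, every point of `Y` has a good partner in `X` for all large times. -/
lemma exists_birkhoffSum_lt_of_delta2_lt [Nonempty X] [Nonempty Y] (hC : ∀ p, |f p| ≤ C)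
    (hc : delta2 T S f < c) :
    ∀ᶠ k : ℕ in atTop, ∀ y, ∃ x, birkhoffSum (Prod.map T S) f k (x, y) < k * c := by
  filter_upwards [eventually_lt_of_limsup_lt hc
    (isBoundedUnder_le_of_abs_le fun k => abs_iSup_iInf_birk2_le hC k),
    eventually_gt_atTop 0] with k hk hk0 y
  obtain ⟨x, hx⟩ := exists_lt_of_ciInf_lt ((le_ciSup (bddAbove_iInf_birk2 hC k) y).trans_lt hk)
  have hk' : (0 : ℝ) < k := by exact_mod_cast hk0
  exact ⟨x, by rwa [birk2_eq, inv_mul_lt_iff₀ hk'] at hx⟩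

/-- Below `δ(f)`, for arbitrarily large times some point of `Y` has no bad partner in `X`. -/
lemma frequently_lt_birkhoffSum_of_lt_delta2 [Nonempty X] [Nonempty Y] (hC : ∀ p, |f p| ≤ C)
    (hc : c < delta2 T S f) :
    ∃ᶠ k : ℕ in atTop, ∃ y, ∀ x, k * c < birkhoffSum (Prod.map T S) f k (x, y) := by
  refine ((frequently_lt_of_lt_limsup
    (isCoboundedUnder_le_of_abs_le fun k => abs_iSup_iInf_birk2_le hC k) hc).and_eventually
    (eventually_gt_atTop 0)).mono ?_
  rintro k ⟨hk, hk0⟩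
  obtain ⟨y, hy⟩ := exists_lt_of_lt_ciSup hk
  have hk' : (0 : ℝ) < k := by exact_mod_cast hk0
  refine ⟨y, fun x => ?_⟩
  have := hy.trans_le (ciInf_le (bddBelow_birk2 hC k y) x)
  rwa [birk2_eq, lt_inv_mul_iff₀ hk'] at this

lemma eventually_const_le_mul (B : ℝ) {ε : ℝ} (hε : 0 < ε) : ∀ᶠ k : ℕ in atTop, B ≤ k * ε :=
  (tendsto_natCast_atTop_atTop.atTop_mul_const hε).eventually_ge_atTop B

end Averages

section Comparison

variable {X Y : Type*} [MetricSpace X] [CompactSpace X] [MetricSpace Y] [CompactSpace Y]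
  {f : X × Y → ℝ}

lemma exists_abs_le (hf : Continuous f) : ∃ C, ∀ p, |f p| ≤ C := by
  obtain ⟨C, hC⟩ := isCompact_univ.exists_bound_of_continuousOn hf.continuousOn
  exact ⟨C, fun p => hC p (Set.mem_univ p)⟩

lemma exists_abs_sub_lt (hf : Continuous f) {ε : ℝ} (hε : 0 < ε) :
    ∃ η > 0, ∀ p q, dist p q < η → |f p - f q| < ε := by
  obtain ⟨η, hη, h⟩ := Metric.uniformContinuous_iff.1
    (CompactSpace.uniformContinuous_of_continuous hf) ε hε
  exact ⟨η, hη, fun p q hpq => h hpq⟩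

lemma birkhoffSum_le_add {Z : Type*} {R : Z → Z} {f : Z → ℝ} {k : ℕ} {z w : Z} {ε : ℝ}
    (h : ∀ j < k, |f (R^[j] z) - f (R^[j] w)| < ε) :
    birkhoffSum R f k z ≤ birkhoffSum R f k w + k * ε := by
  have : birkhoffSum R f k z ≤ ∑ j ∈ Finset.range k, (f (R^[j] w) + ε) := by
    refine Finset.sum_le_sum fun j hj => ?_
    linarith [(abs_lt.1 (h j (Finset.mem_range.1 hj))).2]
  simpa [Finset.sum_add_distrib, birkhoffSum] using this

/-- If `c < δ(f)`, some periodic point of `S` has Birkhoff averages essentially above `c`,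
whatever the partner in `X`. -/
lemma exists_periodic_le_birkhoffSum [Nonempty X] [Nonempty Y] {T : X → X} {S : Y ≃ₜ Y}
    (hf : Continuous f) (hS : PerSpecProp S) {c : ℝ} (hc : c < delta2 T S f) :
    ∃ (y : Y) (P : ℕ), 0 < P ∧ S^[P] y = y ∧ ∃ K : ℝ, ∀ (x : X) (k : ℕ),
      k * c - K ≤ birkhoffSum (Prod.map T S) f k (x, y) := by
  obtain ⟨C, hC⟩ := exists_abs_le hf
  obtain ⟨c', hcc', hc'⟩ := exists_between hc
  have hε : 0 < (c' - c) / 2 := by linarith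
  obtain ⟨η, hη, hfη⟩ := exists_abs_sub_lt hf hε
  obtain ⟨D, hD⟩ := hS.exists_periodic_tracing hη
  obtain ⟨k, ⟨y₀, hy₀⟩, hk0, hkε⟩ := ((frequently_lt_birkhoffSum_of_lt_delta2 hC hc').and_eventually
    ((eventually_gt_atTop 0).and (eventually_const_le_mul (D * (C + |c|)) hε))).exists
  obtain ⟨y, hy, hper⟩ := hD k hk0 y₀
  refine ⟨y, k + D, by omega, hper, (k + D : ℕ) * (C + |c|), fun x => ?_⟩
  refine le_birkhoffSum_of_blocks hC (by omega) fun m => ?_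
  have hm : S^[m * (k + D)] y = y :=
    Function.IsPeriodicPt.const_mul (show Function.IsPeriodicPt S (k + D) y from hper) m
  rw [iterate_prodMap, hm, birkhoffSum_add]
  set x₁ := T^[m * (k + D)] x
  have h1 : birkhoffSum (Prod.map T S) f k (x₁, y₀) ≤
      birkhoffSum (Prod.map T S) f k (x₁, y) + k * ((c' - c) / 2) := by
    refine birkhoffSum_le_add fun j hj => ?_
    rw [iterate_prodMap, iterate_prodMap]
    refine hfη _ _ ?_
    rw [Prod.dist_eq, dist_self, max_eq_right dist_nonneg, dist_comm]
    exact hy j hj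
  have h2 := neg_le_of_abs_le (abs_birkhoffSum_le (R := Prod.map T S) hC D
    ((Prod.map T S)^[k] (x₁, y)))
  have h3 := hy₀ x₁
  have h4 : (D : ℝ) * c ≤ D * |c| := mul_le_mul_of_nonneg_left (le_abs_self c) (Nat.cast_nonneg _)
  push_cast
  linarith

/-- If `δ(f) < c`, every point of `Y` has a partner in `X` with Birkhoff averages essentially
below `c`. -/
lemma exists_birkhoffSum_le [Nonempty X] [Nonempty Y] {T : X ≃ₜ X} {S : Y → Y}
    (hf : Continuous f) (hT : PerSpecProp T) {c : ℝ} (hc : delta2 T S f < c) (y : Y) :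
    ∃ (x : X) (K : ℝ), ∀ k : ℕ, birkhoffSum (Prod.map T S) f k (x, y) ≤ k * c + K := by
  obtain ⟨C, hC⟩ := exists_abs_le hf
  obtain ⟨c', hc', hcc'⟩ := exists_between hc
  have hε : 0 < (c - c') / 2 := by linarith
  obtain ⟨η, hη, hfη⟩ := exists_abs_sub_lt hf hε
  obtain ⟨D, hD⟩ := hT.exists_tracing_seq (half_pos hη)
  obtain ⟨L, hL, hL0, hLε⟩ := ((exists_birkhoffSum_lt_of_delta2_lt hC hc').and
    ((eventually_gt_atTop 0).and (eventually_const_le_mul (D * (C + |c|)) hε))).exists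
  choose z hz using hL
  obtain ⟨x, hx⟩ := hD L hL0 fun i => z (S^[i * (L + D)] y)
  refine ⟨x, (L + D : ℕ) * (C + |c|), ?_⟩
  refine birkhoffSum_le_of_blocks hC (by omega) fun m => ?_
  rw [iterate_prodMap, birkhoffSum_add]
  set y₁ := S^[m * (L + D)] y
  set x₁ := T^[m * (L + D)] x
  have h1 : birkhoffSum (Prod.map T S) f L (x₁, y₁) ≤
      birkhoffSum (Prod.map T S) f L (z y₁, y₁) + L * ((c - c') / 2) := by
    refine birkhoffSum_le_add fun j hj => ?_
    rw [iterate_prodMap, iterate_prodMap]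
    refine hfη _ _ ?_
    rw [Prod.dist_eq, dist_self, max_eq_left dist_nonneg]
    exact (hx m j hj).trans_lt (half_lt_self hη)
  have h2 := le_of_abs_le (abs_birkhoffSum_le (R := Prod.map T S) hC D
    ((Prod.map T S)^[L] (x₁, y₁)))
  have h3 := hz y₁
  have h4 : -((D : ℝ) * c) ≤ D * |c| := by
    rw [← mul_neg]
    exact mul_le_mul_of_nonneg_left (neg_le_abs c) (Nat.cast_nonneg _)
  push_cast
  linarith

lemma gamma2_eq_delta2 [Nonempty X] [Nonempty Y] {T : X ≃ₜ X} {S : Y ≃ₜ Y}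
    (hf : Continuous f) (hT : PerSpecProp T) (hS : PerSpecProp S) :
    gamma2 T S f = delta2 T S f := by
  obtain ⟨C, hC⟩ := exists_abs_le hf
  have hlim : ∀ x y, |limsup (fun k => birk2 T S f k x y) atTop| ≤ C := fun x y =>
    abs_limsup_le fun k => abs_birk2_le hC k x y
  have hbelow : ∀ y, BddBelow (Set.range fun x => limsup (fun k => birk2 T S f k x y) atTop) :=
    fun y => ⟨-C, by rintro _ ⟨x, rfl⟩; exact neg_le_of_abs_le (hlim x y)⟩
  have habove : BddAbove (Set.range fun y => ⨅ x, limsup (fun k => birk2 T S f k x y) atTop) :=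
    ⟨C, by
      rintro _ ⟨y, rfl⟩
      exact ciInf_le_of_le (hbelow y) (Classical.arbitrary X) (le_of_abs_le (hlim _ y))⟩
  refine le_antisymm (le_of_forall_gt_imp_ge_of_dense fun c hc => ?_)
    (le_of_forall_lt_imp_le_of_dense fun c hc => ?_)
  · refine ciSup_le fun y => ?_
    obtain ⟨x, K, hx⟩ := exists_birkhoffSum_le hf hT hc y
    exact ciInf_le_of_le (hbelow y) x (limsup_birk2_le hC hx)
  · obtain ⟨y, -, -, -, K, hy⟩ := exists_periodic_le_birkhoffSum hf hS hc
    exact le_ciSup_of_le habove y (le_ciInf fun x => le_limsup_birk2 hC (hy x))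

lemma delta2_le_beta2 [Nonempty X] [Nonempty Y] {T : X ≃ₜ X} {S : Y ≃ₜ Y}
    (hf : Continuous f) (hT : PerSpecProp T) (hS : PerSpecProp S) :
    delta2 T S f ≤ beta2 T S f := by
  obtain ⟨C, hC⟩ := exists_abs_le hf
  refine le_of_forall_lt_imp_le_of_dense fun c hc => ?_
  obtain ⟨y, P, hP, hyP, K, hy⟩ := exists_periodic_le_birkhoffSum hf hS hc
  obtain ⟨D, hD⟩ := hT.exists_periodic_tracing one_pos
  obtain ⟨x, -, hx⟩ := hD 1 one_pos (Classical.arbitrary X)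
  have hper : (Prod.map T S)^[(1 + D) * P] (x, y) = (x, y) := by
    rw [iterate_prodMap, Prod.mk.injEq]
    exact ⟨Function.IsPeriodicPt.mul_const (show Function.IsPeriodicPt T (1 + D) x from hx) P,
      Function.IsPeriodicPt.const_mul (show Function.IsPeriodicPt S P y from hyP) (1 + D)⟩
  have hxy : (x, y) ∈ reg2 T S f :=
    exists_tendsto_of_periodic hC (Nat.mul_pos (by omega) hP) hper
  refine le_csSup_of_le ⟨C, ?_⟩ ⟨y, ⟨x, hxy⟩, rfl⟩ (le_csInf ?_ ?_)
  · rintro _ ⟨y', ⟨x', hx'⟩, rfl⟩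
    obtain ⟨L, hL⟩ := hx'
    refine csInf_le_of_le ⟨-C, ?_⟩ ⟨x', ⟨L, hL⟩, hL⟩
      (le_of_tendsto' hL fun k => le_of_abs_le (abs_birk2_le hC k _ _))
    rintro L' ⟨x'', -, hL'⟩
    exact ge_of_tendsto' hL' fun k => neg_le_of_abs_le (abs_birk2_le hC k _ _)
  · obtain ⟨L, hL⟩ := hxy
    exact ⟨L, x, ⟨L, hL⟩, hL⟩
  · rintro L ⟨x', -, hL⟩
    refine le_of_tendsto_of_tendsto (tendsto_add_const_div c (-K)) hL ?_
    filter_upwards [eventually_gt_atTop 0] with k hk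
    exact le_inv_mul_of_le hk (hy x' k)

end Comparison

section InvariantMeasures

/-- The average of the first `k` push-forwards of a measure under a map. -/
def birkhoffMeasure {Z : Type*} [MeasurableSpace Z] (R : Z → Z) (μ : Measure Z) (k : ℕ) :
    Measure Z :=
  (k : ℝ≥0∞)⁻¹ • ∑ j ∈ Finset.range k, μ.map R^[j]

lemma isProbabilityMeasure_birkhoffMeasure {Z : Type*} [MeasurableSpace Z] {R : Z → Z}
    (hR : Measurable R) (μ : Measure Z) [IsProbabilityMeasure μ] {k : ℕ} (hk : 0 < k) :
    IsProbabilityMeasure (birkhoffMeasure R μ k) := by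
  refine ⟨?_⟩
  have : ∀ j, μ.map R^[j] Set.univ = 1 := fun j => by
    rw [Measure.map_apply (hR.iterate j) MeasurableSet.univ, Set.preimage_univ, measure_univ]
  simp only [birkhoffMeasure, Measure.smul_apply, Measure.coe_finsetSum, Finset.sum_apply, this,
    Finset.sum_const, Finset.card_range, smul_eq_mul, nsmul_eq_mul, mul_one]
  exact ENNReal.inv_mul_cancel (by exact_mod_cast hk.ne') (ENNReal.natCast_ne_top k)

lemma continuous_birkhoffSum {Z : Type*} [TopologicalSpace Z] {R : Z → Z} (hR : Continuous R)
    {h : Z → ℝ} (hh : Continuous h) (k : ℕ) : Continuous (birkhoffSum R h k) := by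
  unfold birkhoffSum
  exact continuous_finsetSum _ fun j _ => hh.comp (hR.iterate j)

lemma measure_eq_of_forall_integral_eq {Z : Type*} [MetricSpace Z] [MeasurableSpace Z]
    [BorelSpace Z] {μ ν : Measure Z} [IsFiniteMeasure μ] [IsFiniteMeasure ν]
    (h : ∀ g : Z → ℝ, Continuous g → ∫ z, g z ∂μ = ∫ z, g z ∂ν) : μ = ν :=
  ext_of_forall_integral_eq_of_IsFiniteMeasure fun g => h g g.continuous

lemma mem_invMeas_of_forall_integral {Z : Type*} [MetricSpace Z] [MeasurableSpace Z]
    [BorelSpace Z] {R : Z → Z} (hR : Continuous R) (μ : ProbabilityMeasure Z)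
    (h : ∀ g : Z → ℝ, Continuous g → ∫ z, g (R z) ∂μ.toMeasure = ∫ z, g z ∂μ.toMeasure) :
    μ ∈ invMeas R := by
  have : IsProbabilityMeasure (μ.toMeasure.map R) :=
    Measure.isProbabilityMeasure_map hR.measurable.aemeasurable
  refine measure_eq_of_forall_integral_eq fun g hg => ?_
  rw [integral_map hR.measurable.aemeasurable hg.aestronglyMeasurable]
  exact h g hg

variable {Z : Type*} [MetricSpace Z] [CompactSpace Z] [MeasurableSpace Z] [BorelSpace Z]

lemma Continuous.integrable_of_compactSpace {h : Z → ℝ} (hh : Continuous h) (μ : Measure Z)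
    [IsFiniteMeasure μ] : Integrable h μ :=
  hh.integrable_of_hasCompactSupport (HasCompactSupport.of_compactSpace h)

lemma integral_birkhoffMeasure {R : Z → Z} (hR : Continuous R) (μ : Measure Z)
    [IsProbabilityMeasure μ] {h : Z → ℝ} (hh : Continuous h) (k : ℕ) :
    ∫ z, h z ∂(birkhoffMeasure R μ k) = (k : ℝ)⁻¹ * ∫ z, birkhoffSum R h k z ∂μ := by
  have hprob : ∀ j, IsProbabilityMeasure (μ.map R^[j]) := fun j =>
    Measure.isProbabilityMeasure_map (hR.measurable.iterate j).aemeasurable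
  rw [birkhoffMeasure, integral_smul_measure,
    integral_finsetSum_measure fun j _ => hh.integrable_of_compactSpace _]
  unfold birkhoffSum
  rw [integral_finsetSum (f := fun j z => h (R^[j] z)) _ fun j _ =>
    (hh.comp (hR.iterate j)).integrable_of_compactSpace μ]
  simp only [ENNReal.toReal_inv, ENNReal.toReal_natCast, smul_eq_mul]
  congr 1
  refine Finset.sum_congr rfl fun j _ => ?_
  exact integral_map (hR.measurable.iterate j).aemeasurable hh.aestronglyMeasurable

lemma integral_birkhoffSum_of_mem_invMeas {R : Z → Z} (hR : Continuous R)
    {μ : ProbabilityMeasure Z} (hμ : μ ∈ invMeas R) {h : Z → ℝ} (hh : Continuous h) (k : ℕ) :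
    ∫ z, birkhoffSum R h k z ∂μ.toMeasure = k * ∫ z, h z ∂μ.toMeasure := by
  have hmp : MeasurePreserving R μ.toMeasure μ.toMeasure := ⟨hR.measurable, hμ⟩
  have : ∀ j, ∫ z, h (R^[j] z) ∂μ.toMeasure = ∫ z, h z ∂μ.toMeasure := fun j => by
    rw [← integral_map (hR.measurable.iterate j).aemeasurable hh.aestronglyMeasurable,
      (hmp.iterate j).map_eq]
  unfold birkhoffSum
  rw [integral_finsetSum (f := fun j z => h (R^[j] z)) _ fun j _ =>
    (hh.comp (hR.iterate j)).integrable_of_compactSpace _]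
  simp [this]

/-- **Krylov–Bogoliubov**: limits along ultrafilters of averaged measures are invariant. -/
lemma exists_mem_invMeas_tendsto {R : Z → Z} (hR : Continuous R) (m : ℕ → Measure Z)
    [∀ k, IsProbabilityMeasure (m k)] :
    ∃ μ ∈ invMeas R, ∃ F : Ultrafilter ℕ, (F : Filter ℕ) ≤ atTop ∧
      ∀ h : Z → ℝ, Continuous h →
        Tendsto (fun k => ((k + 1 : ℕ) : ℝ)⁻¹ * ∫ z, birkhoffSum R h (k + 1) z ∂(m k)) F
          (𝓝 (∫ z, h z ∂μ.toMeasure)) := by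
  have hprob : ∀ k, IsProbabilityMeasure (birkhoffMeasure R (m k) (k + 1)) := fun k =>
    isProbabilityMeasure_birkhoffMeasure hR.measurable (m k) k.succ_pos
  let u : ℕ → ProbabilityMeasure Z := fun k => ⟨birkhoffMeasure R (m k) (k + 1), hprob k⟩
  let F : Ultrafilter ℕ := Ultrafilter.of atTop
  have hF : (F : Filter ℕ) ≤ atTop := Ultrafilter.of_le atTop
  obtain ⟨μ, -, hμ⟩ := isCompact_univ.ultrafilter_le_nhds (F.map u) (by simp)
  have hlim : ∀ h : Z → ℝ, Continuous h →
      Tendsto (fun k => ((k + 1 : ℕ) : ℝ)⁻¹ * ∫ z, birkhoffSum R h (k + 1) z ∂(m k)) F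
        (𝓝 (∫ z, h z ∂μ.toMeasure)) := by
    intro h hh
    have h1 : Tendsto (fun k => ∫ z, h z ∂(u k).toMeasure) F (𝓝 (∫ z, h z ∂μ.toMeasure)) :=
      ((ProbabilityMeasure.continuous_integral_continuousMap (⟨h, hh⟩ : C(Z, ℝ))).tendsto μ).comp
        (show Tendsto u F (𝓝 μ) from hμ)
    exact h1.congr fun k => integral_birkhoffMeasure hR (m k) hh (k + 1)
  refine ⟨μ, mem_invMeas_of_forall_integral hR μ fun g hg => ?_, F, hF, hlim⟩
  obtain ⟨C, hC⟩ := isCompact_univ.exists_bound_of_continuousOn hg.continuousOn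
  have h1 := (hlim (g ∘ R) (hg.comp hR)).sub (hlim g hg)
  have h2 : Tendsto (fun k : ℕ => ((k + 1 : ℕ) : ℝ)⁻¹ * (C + C)) F (𝓝 0) := by
    have h3 : Tendsto (fun k : ℕ => ((k + 1 : ℕ) : ℝ)⁻¹ * (C + C)) atTop (𝓝 (0 * (C + C))) :=
      ((tendsto_inv_atTop_nhds_zero_nat (𝕜 := ℝ)).comp (tendsto_add_atTop_nat 1)).mul_const _
    rw [zero_mul] at h3
    exact h3.mono_left hF
  refine sub_eq_zero.1 (tendsto_nhds_unique h1 (squeeze_zero_norm (fun k => ?_) h2))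
  rw [← mul_sub, ← integral_sub
    ((continuous_birkhoffSum hR (hg.comp hR) _).integrable_of_compactSpace _)
    ((continuous_birkhoffSum hR hg _).integrable_of_compactSpace _), norm_mul, norm_inv,
    Real.norm_natCast]
  refine mul_le_mul_of_nonneg_left ?_ (by positivity)
  refine (norm_integral_le_of_norm_le_const (Eventually.of_forall fun z => ?_)).trans_eq
    (by rw [probReal_univ, mul_one])
  have e : birkhoffSum R (g ∘ R) (k + 1) z = birkhoffSum R g (k + 1) (R z) := by
    simp only [birkhoffSum, Function.comp_apply, ← Function.iterate_succ_apply',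
      Function.iterate_succ_apply]
  rw [e, birkhoffSum_apply_sub_birkhoffSum]
  exact (norm_sub_le _ _).trans (add_le_add (hC _ trivial) (hC _ trivial))

lemma birkhoffMeasure_dirac_mem_invMeas {R : Z → Z} (hR : Continuous R) {z : Z} {P : ℕ}
    (hz : R^[P] z = z) (hprob : IsProbabilityMeasure (birkhoffMeasure R (Measure.dirac z) P)) :
    (⟨birkhoffMeasure R (Measure.dirac z) P, hprob⟩ : ProbabilityMeasure Z) ∈ invMeas R := by
  refine mem_invMeas_of_forall_integral hR _ fun g hg => ?_
  have e : birkhoffSum R (g ∘ R) P z = birkhoffSum R g P (R z) := by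
    simp only [birkhoffSum, Function.comp_apply, ← Function.iterate_succ_apply',
      Function.iterate_succ_apply]
  have h1 := integral_birkhoffMeasure hR (Measure.dirac z) (hg.comp hR) P
  have h2 := integral_birkhoffMeasure hR (Measure.dirac z) hg P
  rw [integral_dirac] at h1 h2
  have h3 := birkhoffSum_apply_sub_birkhoffSum R g P z
  rw [hz, sub_self, sub_eq_zero] at h3
  rw [e, h3, ← h2] at h1
  exact h1

lemma ae_birkhoffMeasure_dirac {R : Z → Z} (hR : Continuous R) (z : Z) (P : ℕ) :
    ∀ᵐ w ∂(birkhoffMeasure R (Measure.dirac z) P), ∃ i < P, R^[i] z = w := by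
  have hfin : {w | ∃ i < P, R^[i] z = w}.Finite := (Set.finite_lt_nat P).image _
  rw [ae_iff, birkhoffMeasure, Measure.smul_apply, Measure.coe_finsetSum, Finset.sum_apply,
    Finset.sum_eq_zero, smul_zero]
  intro j hj
  rw [Measure.map_dirac' (hR.measurable.iterate j),
    Measure.dirac_apply' _ (show MeasurableSet {w | ¬ ∃ i < P, R^[i] z = w} from
      hfin.measurableSet.compl)]
  refine Set.indicator_of_notMem ?_ _
  rw [Set.mem_ofPred_eq, not_not]
  exact ⟨j, Finset.mem_range.1 hj, rfl⟩

end InvariantMeasures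

section Alpha

/-- Measurable selection of near-minimizers of a continuous function. -/
lemma exists_measurable_lt {X Y : Type*}
    [TopologicalSpace X] [TopologicalSpace.SeparableSpace X] [Nonempty X] [MeasurableSpace X]
    [TopologicalSpace Y] [MeasurableSpace Y] [OpensMeasurableSpace Y]
    {g : X × Y → ℝ} (hg : Continuous g) {c : ℝ}
    (h : ∀ y, ∃ x, g (x, y) < c) : ∃ s : Y → X, Measurable s ∧ ∀ y, g (s y, y) < c := by
  classical
  have hd : ∀ y, ∃ n, g (TopologicalSpace.denseSeq X n, y) < c := fun y => by
    obtain ⟨n, hn⟩ := (TopologicalSpace.denseRange_denseSeq X).exists_mem_open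
      (isOpen_lt (hg.comp (Continuous.prodMk_left y)) continuous_const) (h y)
    exact ⟨n, hn⟩
  refine ⟨fun y => TopologicalSpace.denseSeq X (Nat.find (hd y)),
    Measurable.find (fun n => measurable_const) (fun n => ?_) hd, fun y => Nat.find_spec (hd y)⟩
  exact (isOpen_lt (hg.comp (Continuous.prodMk_right _)) continuous_const).measurableSet

variable {X Y : Type*}
  [MetricSpace X] [CompactSpace X] [MeasurableSpace X] [BorelSpace X]
  [MetricSpace Y] [CompactSpace Y] [MeasurableSpace Y] [BorelSpace Y]
  {f : X × Y → ℝ}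

/-- If the averages over a periodic point `y` are essentially at least `c` for every partner of
`y`, so is the integral of `f` for every invariant lift of the orbit measure of `y`. -/
lemma le_integral_of_periodic {T : X ≃ₜ X} {S : Y ≃ₜ Y} (hf : Continuous f) {c K : ℝ} {y : Y}
    {P : ℕ} (hy : ∀ (x : X) (k : ℕ), k * c - K ≤ birkhoffSum (Prod.map T S) f k (x, y))
    {lam : ProbabilityMeasure (X × Y)} (hlam : lam ∈ invMeas (Prod.map T S))
    (hmarg : lam.toMeasure.map Prod.snd = birkhoffMeasure S (Measure.dirac y) P) :
    c ≤ ∫ p, f p ∂lam.toMeasure := by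
  obtain ⟨C, hC⟩ := exists_abs_le hf
  have hR : Continuous (Prod.map T S) := T.continuous.prodMap S.continuous
  have hae : ∀ᵐ p ∂lam.toMeasure, ∃ i < P, S^[i] y = p.2 := by
    refine ae_of_ae_map (p := fun w => ∃ i < P, S^[i] y = w) measurable_snd.aemeasurable ?_
    rw [hmarg]
    exact ae_birkhoffMeasure_dirac S.continuous y P
  have hk : ∀ k : ℕ, k * c - (K + P * (|c| + C)) ≤ k * ∫ p, f p ∂lam.toMeasure := fun k => by
    rw [← integral_birkhoffSum_of_mem_invMeas hR hlam hf k]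
    have hconst : ∫ _, ((k : ℝ) * c - (K + P * (|c| + C))) ∂lam.toMeasure =
        k * c - (K + P * (|c| + C)) := by simp
    rw [← hconst]
    refine integral_mono_ae (integrable_const _)
      ((continuous_birkhoffSum hR hf k).integrable_of_compactSpace _) ?_
    filter_upwards [hae] with p hp
    obtain ⟨i, hi, hip⟩ := hp
    obtain ⟨x, hx⟩ := (T.surjective.iterate i) p.1
    have e : (Prod.map T S)^[i] (x, y) = p := by rw [iterate_prodMap, hx, hip]
    have h1 := hy x (i + k)
    rw [birkhoffSum_add, e] at h1
    have h2 := le_of_abs_le (abs_birkhoffSum_le (R := Prod.map T S) hC i (x, y))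
    have hC0 : 0 ≤ C := (abs_nonneg _).trans (hC p)
    have h3 : (i : ℝ) * (|c| + C) ≤ P * (|c| + C) := by gcongr
    have h4 : -((i : ℝ) * c) ≤ i * |c| := by
      rw [← mul_neg]
      exact mul_le_mul_of_nonneg_left (neg_le_abs c) (Nat.cast_nonneg _)
    push_cast at h1
    linarith
  refine le_of_tendsto (tendsto_add_const_div c (-(K + P * (|c| + C)))) ?_
  filter_upwards [eventually_gt_atTop 0] with k hk0
  have hk' : (k : ℝ) ≠ 0 := by exact_mod_cast hk0.ne'
  simpa [hk'] using le_inv_mul_of_le hk0 (hk k)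

variable [Nonempty X] [Nonempty Y]

lemma exists_lift_integral_le {T : X ≃ₜ X} {S : Y ≃ₜ Y} (hf : Continuous f) {c : ℝ}
    (hc : delta2 T S f < c) {ν : ProbabilityMeasure Y} (hν : ν ∈ invMeas S) :
    ∃ lam ∈ invMeas (Prod.map T S), lam.toMeasure.map Prod.snd = ν.toMeasure ∧
      ∫ p, f p ∂lam.toMeasure ≤ c := by
  obtain ⟨C, hC⟩ := exists_abs_le hf
  have hR : Continuous (Prod.map T S) := T.continuous.prodMap S.continuous
  have hsel : ∀ k : ℕ, ∃ s : Y → X, Measurable s ∧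
      ((∀ y, ∃ x, birkhoffSum (Prod.map T S) f k (x, y) < k * c) →
        ∀ y, birkhoffSum (Prod.map T S) f k (s y, y) < k * c) := fun k => by
    by_cases h : ∀ y, ∃ x, birkhoffSum (Prod.map T S) f k (x, y) < k * c
    · obtain ⟨s, hs, hs'⟩ := exists_measurable_lt (continuous_birkhoffSum hR hf k) h
      exact ⟨s, hs, fun _ => hs'⟩
    · exact ⟨fun _ => Classical.arbitrary X, measurable_const, fun h' => absurd h' h⟩
  choose s hs hs' using hsel
  have hgraph : ∀ k, Measurable fun y => (s k y, y) := fun k => (hs k).prodMk measurable_id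
  have hprob : ∀ k, IsProbabilityMeasure (ν.toMeasure.map fun y => (s (k + 1) y, y)) := fun k =>
    Measure.isProbabilityMeasure_map (hgraph _).aemeasurable
  obtain ⟨lam, hlam, F, hF, hlim⟩ := exists_mem_invMeas_tendsto hR
    fun k => ν.toMeasure.map fun y => (s (k + 1) y, y)
  have hint : ∀ (h : X × Y → ℝ), Continuous h → ∀ k,
      ∫ p, birkhoffSum (Prod.map T S) h (k + 1) p ∂(ν.toMeasure.map fun y => (s (k + 1) y, y)) =
      ∫ y, birkhoffSum (Prod.map T S) h (k + 1) (s (k + 1) y, y) ∂ν.toMeasure := fun h hh k =>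
    integral_map (hgraph _).aemeasurable (continuous_birkhoffSum hR hh _).aestronglyMeasurable
  refine ⟨lam, hlam, ?_, ?_⟩
  · have : IsProbabilityMeasure (lam.toMeasure.map Prod.snd) :=
      Measure.isProbabilityMeasure_map measurable_snd.aemeasurable
    refine measure_eq_of_forall_integral_eq fun g hg => ?_
    rw [integral_map measurable_snd.aemeasurable hg.aestronglyMeasurable]
    refine tendsto_nhds_unique (hlim (g ∘ Prod.snd) (hg.comp continuous_snd)) ?_
    refine tendsto_const_nhds.congr fun k => ?_
    have e : ∀ p : X × Y, birkhoffSum (Prod.map T S) (g ∘ Prod.snd) (k + 1) p =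
        birkhoffSum S g (k + 1) p.2 := fun p => by
      simp [birkhoffSum, Prod.map_iterate]
    rw [hint _ (hg.comp continuous_snd)]
    simp only [e]
    rw [integral_birkhoffSum_of_mem_invMeas S.continuous hν hg,
      inv_mul_cancel_left₀ (by positivity)]
  · refine le_of_tendsto (hlim f hf) (hF ?_)
    filter_upwards [(tendsto_add_atTop_nat 1).eventually
      (exists_birkhoffSum_lt_of_delta2_lt hC hc)] with k hk
    rw [hint f hf, inv_mul_le_iff₀ (by positivity)]
    have hmeas : Measurable fun y => birkhoffSum (Prod.map T S) f (k + 1) (s (k + 1) y, y) :=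
      (continuous_birkhoffSum hR hf _).measurable.comp (hgraph _)
    refine (integral_mono (Integrable.of_bound hmeas.aestronglyMeasurable _
      (Eventually.of_forall fun y => abs_birkhoffSum_le hC (k + 1) _))
      (integrable_const (((k + 1 : ℕ) : ℝ) * c)) fun y => (hs' _ hk y).le).trans_eq ?_
    simp

lemma alpha2_eq_delta2 {T : X ≃ₜ X} {S : Y ≃ₜ Y} (hf : Continuous f) (hS : PerSpecProp S) :
    alpha2 T S f = delta2 T S f := by
  obtain ⟨C, hC⟩ := exists_abs_le hf
  have hpsi : ∀ c, delta2 T S f < c → ∀ ν ∈ invMeas S, psi2 T S f ν ≤ c := fun c hc ν hν => by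
    obtain ⟨lam, hlam, hmarg, hle⟩ := exists_lift_integral_le hf hc hν
    refine csInf_le_of_le ⟨-C, ?_⟩ ⟨lam, hlam, hmarg, rfl⟩ hle
    rintro _ ⟨lam', -, -, rfl⟩
    have := norm_integral_le_of_norm_le_const (μ := lam'.toMeasure)
      (f := f) (C := C) (Eventually.of_forall hC)
    rw [probReal_univ, mul_one] at this
    exact neg_le_of_abs_le this
  have hlow : ∀ c, c < delta2 T S f → ∃ ν ∈ invMeas S, c ≤ psi2 T S f ν := fun c hc => by
    obtain ⟨y, P, hP, hyP, K, hy⟩ := exists_periodic_le_birkhoffSum hf hS hc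
    have hprob := isProbabilityMeasure_birkhoffMeasure S.continuous.measurable
      (Measure.dirac y) hP
    have hν := birkhoffMeasure_dirac_mem_invMeas S.continuous hyP hprob
    refine ⟨_, hν, le_csInf ?_ ?_⟩
    · obtain ⟨lam, hlam, hmarg, -⟩ := exists_lift_integral_le hf (lt_add_one (delta2 T S f)) hν
      exact ⟨_, lam, hlam, hmarg, rfl⟩
    · rintro _ ⟨lam, hlam, hmarg, rfl⟩
      exact le_integral_of_periodic hf hy hlam hmarg
  refine le_antisymm (le_of_forall_gt_imp_ge_of_dense fun c hc => ?_)
    (le_of_forall_lt_imp_le_of_dense fun c hc => ?_)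
  · obtain ⟨ν, hν, -⟩ := hlow _ (sub_one_lt (delta2 T S f))
    refine csSup_le ⟨_, ν, hν, rfl⟩ ?_
    rintro _ ⟨ν', hν', rfl⟩
    exact hpsi c hc ν' hν'
  · obtain ⟨ν, hν, hle⟩ := hlow c hc
    refine le_csSup_of_le ⟨delta2 T S f + 1, ?_⟩ ⟨ν, hν, rfl⟩ hle
    rintro _ ⟨ν', hν', rfl⟩
    exact hpsi _ (lt_add_one _) ν' hν'

end Alpha

/-- if `(X, T)` and `(Y, S)` both have the periodic specification
property, then `α(f) = γ(f) = δ(f) ≤ β(f)`. -/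
theorem stmt17
    {X Y : Type*}
    [MetricSpace X] [CompactSpace X] [Nonempty X] [MeasurableSpace X] [BorelSpace X]
    [MetricSpace Y] [CompactSpace Y] [Nonempty Y] [MeasurableSpace Y] [BorelSpace Y]
    (T : X ≃ₜ X) (S : Y ≃ₜ Y) (f : X × Y → ℝ) (hf : Continuous f)
    (hspecX : PerSpecProp T) (hspecY : PerSpecProp S) :
    alpha2 (⇑T) (⇑S) f = gamma2 (⇑T) (⇑S) f ∧
    gamma2 (⇑T) (⇑S) f = delta2 (⇑T) (⇑S) f ∧
    delta2 (⇑T) (⇑S) f ≤ beta2 (⇑T) (⇑S) f := by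
  rw [alpha2_eq_delta2 hf hspecY, gamma2_eq_delta2 hf hspecX hspecY]
  exact ⟨rfl, rfl, delta2_le_beta2 hf hspecX hspecY⟩
end
end
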